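/- arXiv:2505.04130 — 4 statements merged into one kernel-verified Lean document; each statement's English description precedes it below -/
import Mathlib

section
/- Let E be a countable Borel equivalence relation on a standard Borel space X and let P ⊆ E be a Borel relation whose restriction to each E-class is a partial order on that class. Then the collection of Borel sets Y ⊆ X such that P restricted to Y admits a Borel linearization — that is, such that there exists a Borel relation L with P ∩ (Y × Y) ⊆ L ⊆ E ∩ (Y × Y) whose restriction to [x]_E ∩ Y is a linear order for every x ∈ Y — is a σ-ideal: it contains the empty set, it is closed under taking Borel subsets, and it is closed under countable unions. -/
/-!
The empty set and Borel subsets are immediate; the content is closure under countable unions.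

Given a Borel linearization `L` of `P` on a set, the `P`-downward closures of the initial segments
of `L` form a chain of `P`-downward closed sets in each `E`-class. Comparing points by the sets of
this chain that contain them gives a preorder (`CutLE`) on the whole space, total on each `E`-class
and extending `P`. If `x` and `y` are equivalent for this preorder and `y` lies in the domain of
`L`, then `P x y`. For linearizations `L n` on `Y n`, the lexicographic combination of these
preorders is total on `E`-classes and extends `P`, and it is antisymmetric on `⋃ n, Y n`: if
`x ∈ Y n` and `y ∈ Y m` are equivalent for all the preorders, then `P x y` and `P y x`.

These definitions quantify only over `E`-classes, which are countable, so Borelness follows from the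
Lusin–Novikov theorem: a countable-to-one Borel image of a standard Borel space is Borel. To prove
it, one refines the topology so that the map `p` is continuous, shows that its domain is a countable union of Borel
sets on which `p` is injective, and applies the Lusin–Souslin theorem to each of them. If there were
no such cover, a splitting construction in the style of the `G₀`-dichotomy
(`Persistent.split`, `not_persistent_univ`) would produce a nonempty perfect set inside one fibre.
-/

open Set Topology MeasureTheory Filter

/-! ### Images of countable-to-one Borel maps -/

/-- An analytic set on which a continuous map is injective is contained in a Borel set on which the
map is injective. For disjoint basic open sets `U`, `V`, the images of `A ∩ U` and `A ∩ V` are disjoint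
analytic sets, hence separated by a Borel set; `C` is cut out by these countably many separations. -/
lemma exists_measurable_injOn_superset {Z W : Type*} [TopologicalSpace Z] [PolishSpace Z]
    [MeasurableSpace Z] [BorelSpace Z] [TopologicalSpace W] [T2Space W]
    [MeasurableSpace W] [BorelSpace W] {p : Z → W} (hp : Continuous p)
    {A : Set Z} (hA : AnalyticSet A) (hinj : InjOn p A) :
    ∃ C, A ⊆ C ∧ MeasurableSet C ∧ InjOn p C := by
  obtain ⟨b, hbc, -, hb⟩ := TopologicalSpace.exists_countable_basis Z
  have hsep : ∀ U ∈ b, ∀ V ∈ b, Disjoint U V →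
      MeasurablySeparable (p '' (A ∩ U)) (p '' (A ∩ V)) := by
    intro U hU V hV hUV
    have han : ∀ O ∈ b, AnalyticSet (p '' (A ∩ O)) := by
      intro O hO
      have h1 : AnalyticSet (⋂ c : Bool, cond c A O) := by
        refine AnalyticSet.iInter fun c => ?_
        cases c
        · exact (hb.isOpen hO).measurableSet.analyticSet
        · exact hA
      have h2 : (⋂ c : Bool, cond c A O) = A ∩ O := by
        ext x; simp [and_comm]
      rw [h2] at h1
      exact h1.image_of_continuous hp
    refine (han U hU).measurablySeparable (han V hV) ?_
    rw [Set.disjoint_left]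
    rintro _ ⟨z, ⟨hzA, hzU⟩, rfl⟩ ⟨z', ⟨hzA', hzV⟩, h⟩
    have := hinj hzA' hzA h
    subst this
    exact Set.disjoint_left.1 hUV hzU hzV
  choose! S hS1 hS2 hS3 using hsep
  let F : Set (Set Z × Set Z) := {q | q ∈ b ×ˢ b ∧ Disjoint q.1 q.2}
  have hF : F.Countable := (hbc.prod hbc).mono fun q hq => hq.1
  refine ⟨⋂ q ∈ F, ((q.1ᶜ ∪ p ⁻¹' S q.1 q.2) ∩ (q.2ᶜ ∪ (p ⁻¹' S q.1 q.2)ᶜ)), ?_, ?_, ?_⟩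
  · intro z hz
    simp only [mem_iInter]
    rintro ⟨U, V⟩ ⟨⟨hU, hV⟩, hUV⟩
    constructor
    · by_cases h : z ∈ U
      · exact Or.inr (hS1 U hU V hV hUV ⟨z, ⟨hz, h⟩, rfl⟩)
      · exact Or.inl h
    · by_cases h : z ∈ V
      · exact Or.inr fun h' => Set.disjoint_left.1 (hS2 U hU V hV hUV) ⟨z, ⟨hz, h⟩, rfl⟩ h'
      · exact Or.inl h
  · refine MeasurableSet.biInter hF ?_
    rintro ⟨U, V⟩ ⟨⟨hU, hV⟩, hUV⟩
    have h1 := (hb.isOpen hU).measurableSet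
    have h2 := (hb.isOpen hV).measurableSet
    have h3 := hp.measurable (hS3 U hU V hV hUV)
    exact (h1.compl.union h3).inter (h2.compl.union h3.compl)
  · intro z hz z' hz' h
    by_contra hne
    obtain ⟨O, O', hO, hO', hzO, hzO', hd⟩ := t2_separation hne
    obtain ⟨U, hU, hzU, hUO⟩ := hb.exists_subset_of_mem_open hzO hO
    obtain ⟨V, hV, hzV, hVO⟩ := hb.exists_subset_of_mem_open hzO' hO'
    have hq : (U, V) ∈ F := ⟨⟨hU, hV⟩, hd.mono hUO hVO⟩
    simp only [mem_iInter] at hz hz'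
    have a1 := (hz _ hq).1.resolve_left (fun h => h hzU)
    have a2 := (hz' _ hq).2.resolve_left (fun h => h hzV)
    apply a2
    change p z' ∈ S U V
    rw [← h]
    exact a1

/-- A sequence of sets is persistent for `p` if, after removing any countable union of Borel sets
on which `p` is injective, some single fibre of `p` still meets all the sets of the sequence. -/
def Persistent {Z W : Type*} [MeasurableSpace Z] (p : Z → W) (U : ℕ → Set Z) : Prop :=
  ∀ 𝒞 : Set (Set Z), 𝒞.Countable → (∀ C ∈ 𝒞, MeasurableSet C ∧ InjOn p C) →
    (⋂ j, p '' (U j \ ⋃₀ 𝒞)).Nonempty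

/-- In a persistent sequence of open sets, one set `U i` can be split into two pieces with
disjoint closures, a small one replacing `U i` and the other replacing `U k`. If every pair of basic open
pieces failed, then after removing the countably many witnesses of failure, the points of `U i`
in fibres meeting every `U j` would form an analytic set on which `p` is injective, and removing a
Borel superset of it would contradict persistence. -/
lemma Persistent.split {Z W : Type*} [MetricSpace Z] [PolishSpace Z]
    [MeasurableSpace Z] [BorelSpace Z] [TopologicalSpace W] [T2Space W]
    [MeasurableSpace W] [BorelSpace W] {p : Z → W} (hp : Continuous p)
    {U : ℕ → Set Z} (hU : Persistent p U) (hUo : ∀ j, IsOpen (U j)) {i k : ℕ} (hik : i ≠ k)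
    {ε : ℝ} (hε : 0 < ε) :
    ∃ S T : Set Z, IsOpen S ∧ IsOpen T ∧ closure S ⊆ U i ∧ closure T ⊆ U i ∧
      Disjoint (closure S) (closure T) ∧ (∀ x ∈ S, ∀ y ∈ S, dist x y < ε) ∧
      Persistent p (Function.update (Function.update U i S) k T) := by
  by_contra! hcon
  obtain ⟨b, hbc, -, hb⟩ := TopologicalSpace.exists_countable_basis Z
  let F : Set (Set Z × Set Z) := {q | q ∈ b ×ˢ b ∧ closure q.1 ⊆ U i ∧ closure q.2 ⊆ U i ∧
      Disjoint (closure q.1) (closure q.2) ∧ (∀ x ∈ q.1, ∀ y ∈ q.1, dist x y < ε)}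
  have hF : F.Countable := (hbc.prod hbc).mono fun q hq => hq.1
  have hkill : ∀ q ∈ F, ∃ 𝒞 : Set (Set Z), 𝒞.Countable ∧
      (∀ C ∈ 𝒞, MeasurableSet C ∧ InjOn p C) ∧
      ¬ (⋂ j, p '' (Function.update (Function.update U i q.1) k q.2 j \ ⋃₀ 𝒞)).Nonempty := by
    rintro ⟨S, T⟩ ⟨⟨hS, hT⟩, h1, h2, h3, h4⟩
    have := hcon S T (hb.isOpen hS) (hb.isOpen hT) h1 h2 h3 h4
    simp only [Persistent, not_forall] at this
    obtain ⟨𝒞, a, c, d⟩ := this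
    exact ⟨𝒞, a, c, d⟩
  choose! 𝒟 hD1 hD2 hD3 using hkill
  let 𝒞 : Set (Set Z) := ⋃ q ∈ F, 𝒟 q
  have hCc : 𝒞.Countable := hF.biUnion hD1
  have hCg : ∀ C ∈ 𝒞, MeasurableSet C ∧ InjOn p C := by
    intro C hC
    simp only [𝒞, mem_iUnion] at hC
    obtain ⟨q, hq, hC⟩ := hC
    exact hD2 q hq C hC
  have hCm : MeasurableSet (⋃₀ 𝒞) := MeasurableSet.sUnion hCc fun C hC => (hCg C hC).1
  have hUm : ∀ j, MeasurableSet (U j \ ⋃₀ 𝒞) := fun j => (hUo j).measurableSet.diff hCm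
  let A : Set Z := ⋂ o : Option ℕ,
    o.elim (U i \ ⋃₀ 𝒞) (fun j => p ⁻¹' (p '' (U j \ ⋃₀ 𝒞)))
  have hA : ∀ z, z ∈ A ↔ z ∈ U i \ ⋃₀ 𝒞 ∧ ∀ j, p z ∈ p '' (U j \ ⋃₀ 𝒞) := by
    intro z
    simp only [A, mem_iInter, Option.forall, Option.elim_none, Option.elim_some, mem_preimage]
  have hAan : AnalyticSet A := by
    refine AnalyticSet.iInter fun o => ?_
    cases o with
    | none => exact (hUm i).analyticSet
    | some j => exact ((hUm j).analyticSet.image_of_continuous hp).preimage hp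
  have hAinj : InjOn p A := by
    intro z hz z' hz' hzz
    by_contra hne
    rw [hA] at hz hz'
    have small : ∀ w ∈ U i, ∃ S ∈ b, w ∈ S ∧ closure S ⊆ U i ∧
        closure S ⊆ Metric.closedBall w (dist z z' / 3) ∧ ∀ x ∈ S, ∀ y ∈ S, dist x y < ε := by
      intro w hw
      obtain ⟨r, hr, hrU⟩ := Metric.nhds_basis_closedBall.mem_iff.1 ((hUo i).mem_nhds hw)
      have hd : 0 < dist z z' := dist_pos.2 hne
      let ρ := min r (min (dist z z' / 3) (ε / 2))
      have hρ : 0 < ρ := by positivity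
      have hρ1 : ρ ≤ r := min_le_left _ _
      have hρ2 : ρ ≤ dist z z' / 3 := (min_le_right _ _).trans (min_le_left _ _)
      have hρ3 : ρ ≤ ε / 2 := (min_le_right _ _).trans (min_le_right _ _)
      obtain ⟨S, hS, hwS, hSb⟩ := hb.exists_subset_of_mem_open
        (Metric.mem_ball_self hρ : w ∈ Metric.ball w ρ) Metric.isOpen_ball
      have hcl : closure S ⊆ Metric.closedBall w ρ :=
        closure_minimal (hSb.trans Metric.ball_subset_closedBall) Metric.isClosed_closedBall
      refine ⟨S, hS, hwS, hcl.trans ((Metric.closedBall_subset_closedBall hρ1).trans hrU),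
        hcl.trans (Metric.closedBall_subset_closedBall hρ2), fun x hx y hy => ?_⟩
      have hx' := Metric.mem_ball.1 (hSb hx)
      have hy' := Metric.mem_ball.1 (hSb hy)
      have := dist_triangle_right x y w
      linarith
    obtain ⟨S, hSb, hzS, hSU, hSd, hSε⟩ := small z hz.1.1
    obtain ⟨T, hTb, hzT, hTU, hTd, -⟩ := small z' hz'.1.1
    have hq : (S, T) ∈ F := by
      refine ⟨⟨hSb, hTb⟩, hSU, hTU, ?_, hSε⟩
      rw [Set.disjoint_left]
      intro y hy hy'
      have h1 := Metric.mem_closedBall.1 (hSd hy)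
      have h2 := Metric.mem_closedBall.1 (hTd hy')
      have h3 := dist_triangle_left z z' y
      have : 0 < dist z z' := dist_pos.2 hne
      linarith
    have hsub : ⋃₀ 𝒟 (S, T) ⊆ ⋃₀ 𝒞 := sUnion_subset_sUnion (subset_biUnion_of_mem hq)
    apply hD3 _ hq
    refine ⟨p z, mem_iInter.2 fun j => ?_⟩
    by_cases hjk : j = k
    · subst hjk
      refine ⟨z', ⟨by simpa using hzT, fun h => hz'.1.2 (hsub h)⟩, hzz.symm⟩
    · by_cases hji : j = i
      · subst hji
        refine ⟨z, ⟨by simpa [Function.update_of_ne hjk] using hzS,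
          fun h => hz.1.2 (hsub h)⟩, rfl⟩
      · obtain ⟨w, hw, hpw⟩ := hz.2 j
        refine ⟨w, ⟨?_, fun h => hw.2 (hsub h)⟩, hpw⟩
        simpa [Function.update_of_ne hjk, Function.update_of_ne hji] using hw.1
  obtain ⟨C, hAC, hCmeas, hCinj⟩ := exists_measurable_injOn_superset hp hAan hAinj
  obtain ⟨x, hx⟩ := hU (insert C 𝒞) (hCc.insert C) (by
    rintro D (rfl | hD)
    · exact ⟨hCmeas, hCinj⟩
    · exact hCg D hD)
  rw [mem_iInter] at hx
  have hsub : ⋃₀ 𝒞 ⊆ ⋃₀ insert C 𝒞 := sUnion_subset_sUnion (subset_insert _ _)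
  obtain ⟨z, hz, rfl⟩ := hx i
  have hzA : z ∈ A := by
    rw [hA]
    refine ⟨⟨hz.1, fun h => hz.2 (hsub h)⟩, fun j => ?_⟩
    obtain ⟨w, hw, hpw⟩ := hx j
    exact ⟨w, ⟨hw.1, fun h => hw.2 (hsub h)⟩, hpw⟩
  exact hz.2 ⟨C, mem_insert _ _, hAC hzA⟩

/-- A continuous map with countable fibres on a Polish space has no persistent constant sequence
`univ`: splitting repeatedly, each index infinitely often, produces in the limit a sequence of
points of a single fibre which is dense in itself, so that this fibre contains a nonempty
perfect set. -/
lemma not_persistent_univ {Z W : Type*} [MetricSpace Z] [CompleteSpace Z] [PolishSpace Z]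
    [MeasurableSpace Z] [BorelSpace Z] [TopologicalSpace W] [T2Space W]
    [MeasurableSpace W] [BorelSpace W] {p : Z → W} (hp : Continuous p)
    (hcount : ∀ w, (p ⁻¹' {w}).Countable) : ¬ Persistent p (fun _ => univ) := by
  intro h0
  -- the index split at stage `n`; it is at most `n` and takes every value infinitely often
  let i : ℕ → ℕ := fun n => (Nat.unpair n).1
  have hi : ∀ n, i n ≤ n := fun n => Nat.unpair_left_le n
  have hinf : ∀ j N, ∃ n ≥ N, i n = j := fun j N =>
    ⟨Nat.pair j N, Nat.right_le_pair j N, by simp [i]⟩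
  let St := {U : ℕ → Set Z // Persistent p U ∧ ∀ j, IsOpen (U j)}
  have hstep : ∀ (n : ℕ) (U : St), ∃ V : St, ∃ S T : Set Z,
      V.1 = Function.update (Function.update U.1 (i n) S) (n + 1) T ∧
      closure S ⊆ U.1 (i n) ∧ closure T ⊆ U.1 (i n) ∧
      Disjoint (closure S) (closure T) ∧ (∀ x ∈ S, ∀ y ∈ S, dist x y < 1 / ((n : ℝ) + 1)) := by
    rintro n ⟨U, hU, hUo⟩
    obtain ⟨S, T, hS, hT, h1, h2, h3, h4, h5⟩ := hU.split hp hUo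
      (show i n ≠ n + 1 from (Nat.lt_succ_of_le (hi n)).ne)
      (Nat.one_div_pos_of_nat : 0 < 1 / ((n : ℝ) + 1))
    refine ⟨⟨_, h5, fun j => ?_⟩, S, T, rfl, h1, h2, h3, h4⟩
    by_cases hj : j = n + 1
    · subst hj; simpa using hT
    · rw [Function.update_of_ne hj]
      by_cases hj' : j = i n
      · subst hj'; simpa using hS
      · rw [Function.update_of_ne hj']; exact hUo j
  choose nxt S T hnxt hSU hTU hST hSε using hstep
  let U : ℕ → St := fun n => Nat.rec ⟨fun _ => univ, h0, fun _ => isOpen_univ⟩ nxt n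
  have hU0 : (U 0).1 = fun _ => univ := rfl
  have hUs : ∀ n, (U (n + 1)).1 =
      Function.update (Function.update (U n).1 (i n) (S n (U n))) (n + 1) (T n (U n)) :=
    fun n => hnxt n (U n)
  have hnew : ∀ n, (U (n + 1)).1 (n + 1) = T n (U n) := fun n => by rw [hUs]; simp
  have hspl : ∀ n, (U (n + 1)).1 (i n) = S n (U n) := fun n => by
    rw [hUs, Function.update_of_ne (Nat.lt_succ_of_le (hi n)).ne]; simp
  have hoth : ∀ n j, j ≠ n + 1 → j ≠ i n → (U (n + 1)).1 j = (U n).1 j := fun n j h1 h2 => by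
    rw [hUs, Function.update_of_ne h1, Function.update_of_ne h2]
  have huniv : ∀ n j, n < j → (U n).1 j = univ := by
    intro n
    induction n with
    | zero => intro j _; rw [hU0]
    | succ n ih =>
      intro j hj
      rw [hoth n j (by omega) (by have := hi n; omega)]
      exact ih j (by omega)
  have hanti : ∀ j, Antitone fun n => (U n).1 j := by
    intro j
    refine antitone_nat_of_succ_le fun n => ?_
    change (U (n + 1)).1 j ⊆ (U n).1 j
    by_cases h1 : j = n + 1
    · subst h1; rw [huniv n (n + 1) (by omega)]; exact subset_univ _
    · by_cases h2 : j = i n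
      · subst h2; rw [hspl]; exact subset_closure.trans (hSU n (U n))
      · rw [hoth n j h1 h2]
  have hx : ∀ n, ∃ x, ∀ j, ∃ z ∈ (U n).1 j, p z = x := by
    intro n
    obtain ⟨x, hx⟩ := (U n).2.1 ∅ countable_empty (by simp)
    refine ⟨x, fun j => ?_⟩
    obtain ⟨z, hz, hpz⟩ := mem_iInter.1 hx j
    exact ⟨z, hz.1, hpz⟩
  choose x w hwU hpw using hx
  have hsmall : ∀ j, ∀ ε > 0, ∃ N, ∀ y ∈ (U N).1 j, ∀ y' ∈ (U N).1 j, dist y y' < ε := by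
    intro j ε hε
    obtain ⟨M, hM⟩ := exists_nat_one_div_lt hε
    obtain ⟨n, hn, rfl⟩ := hinf j M
    refine ⟨n + 1, ?_⟩
    rw [hspl]
    intro y hy y' hy'
    exact (hSε n (U n) y hy y' hy').trans ((Nat.one_div_le_one_div hn).trans_lt hM)
  have hcau : ∀ j, CauchySeq fun n => w n j := by
    intro j
    rw [Metric.cauchySeq_iff']
    intro ε hε
    obtain ⟨N, hN⟩ := hsmall j ε hε
    exact ⟨N, fun n hn => hN _ (hanti j hn (hwU n j)) _ (hwU N j)⟩
  choose z hz using fun j => cauchySeq_tendsto_of_complete (hcau j)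
  have hzcl : ∀ j n, z j ∈ closure ((U n).1 j) := fun j n =>
    mem_closure_of_tendsto (hz j) ((eventually_ge_atTop n).mono fun m hm =>
      hanti j hm (hwU m j))
  have hfib : ∀ j, p (z j) = p (z 0) := by
    intro j
    have h1 : ∀ j, Tendsto x atTop (𝓝 (p (z j))) := fun j =>
      ((hp.tendsto (z j)).comp (hz j)).congr fun n => hpw n j
    exact tendsto_nhds_unique (h1 j) (h1 0)
  have hne : ∀ n, z (n + 1) ≠ z (i n) := by
    intro n h
    have h1 := hzcl (n + 1) (n + 1)
    have h2 := hzcl (i n) (n + 1)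
    rw [hnew] at h1
    rw [hspl, ← h] at h2
    exact Set.disjoint_left.1 (hST n (U n)) h2 h1
  have hclose : ∀ j, ∀ ε > 0, ∃ n, i n = j ∧ dist (z (n + 1)) (z j) < ε := by
    intro j ε hε
    obtain ⟨N, hN⟩ := hsmall j ε hε
    obtain ⟨n, hn, rfl⟩ := hinf j N
    refine ⟨n, rfl, hN _ (hanti _ hn ?_) _ (hanti _ hn ?_)⟩
    · have h1 := hzcl (n + 1) (n + 1)
      rw [hnew] at h1
      exact hTU n (U n) h1
    · have h2 := hzcl (i n) (n + 1)
      rw [hspl] at h2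
      exact hSU n (U n) h2
  have hpre : Preperfect (range z) := by
    rw [preperfect_iff_nhds]
    rintro _ ⟨j, rfl⟩ O hO
    obtain ⟨ε, hε, hεO⟩ := Metric.mem_nhds_iff.1 hO
    obtain ⟨n, rfl, hd⟩ := hclose j ε hε
    exact ⟨z (n + 1), ⟨hεO hd, mem_range_self _⟩, hne n⟩
  obtain ⟨f, hf, -, hfi⟩ := hpre.perfect_closure.exists_nat_bool_injection
    ⟨z 0, subset_closure (mem_range_self 0)⟩
  have hcl : closure (range z) ⊆ p ⁻¹' {p (z 0)} := by
    refine closure_minimal ?_ (isClosed_singleton.preimage hp)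
    rintro _ ⟨j, rfl⟩
    exact hfib j
  have hc : (range f).Countable := (hcount _).mono (hf.trans hcl)
  have : Countable (ℕ → Bool) := by
    have := hc.to_subtype
    exact (Set.rangeFactorization_injective.2 hfi).countable
  -- Cantor's diagonal argument
  obtain ⟨e, he⟩ := exists_surjective_nat (ℕ → Bool)
  obtain ⟨n, hn⟩ := he fun n => !(e n n)
  have := congrFun hn n
  simp at this

/-- **Lusin–Novikov**: the image of a standard Borel space under a countable-to-one Borel map
is Borel. -/
lemma measurableSet_range_of_countable_fibers {Z W : Type*} [MeasurableSpace Z]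
    [StandardBorelSpace Z] [MeasurableSpace W] [StandardBorelSpace W] {p : Z → W}
    (hp : Measurable p) (hcount : ∀ w, (p ⁻¹' {w}).Countable) : MeasurableSet (range p) := by
  let := upgradeStandardBorel W
  obtain ⟨𝒞, hc, hC, hcov⟩ : ∃ 𝒞 : Set (Set Z), 𝒞.Countable ∧
      (∀ C ∈ 𝒞, MeasurableSet C ∧ InjOn p C) ∧ ⋃₀ 𝒞 = univ := by
    by_contra! hcon
    have hpers : Persistent p (fun _ => univ) := by
      intro 𝒞 hc hC
      obtain ⟨z, hz⟩ := (ne_univ_iff_exists_notMem _).1 (hcon 𝒞 hc hC)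
      exact ⟨p z, mem_iInter.2 fun j => ⟨z, ⟨mem_univ _, hz⟩, rfl⟩⟩
    obtain ⟨t, hpol, hborel, hcont⟩ : ∃ t : TopologicalSpace Z,
        PolishSpace Z ∧ BorelSpace Z ∧ Continuous p := by
      let tZ := upgradeStandardBorel Z
      obtain ⟨t', ht', hcont, hpol⟩ := hp.exists_continuous
      refine ⟨t', hpol, @BorelSpace.mk Z t' _ ?_, hcont⟩
      rw [eq_borel_upgradeStandardBorel Z]
      exact (borel_eq_borel_of_le hpol tZ.toPolishSpace ht').symm
    let := TopologicalSpace.upgradeIsCompletelyMetrizable Z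
    exact not_persistent_univ hcont hcount hpers
  have : range p = ⋃ C ∈ 𝒞, p '' C := by
    rw [← image_univ, ← hcov, sUnion_eq_biUnion, image_iUnion₂]
  rw [this]
  exact MeasurableSet.biUnion hc fun C h =>
    (hC C h).1.image_of_measurable_injOn hp (hC C h).2

/-- Existential quantification over a Borel relation with countable sections is Borel. -/
lemma measurableSet_exists_of_countable {α β : Type*} [MeasurableSpace α] [StandardBorelSpace α]
    [MeasurableSpace β] [StandardBorelSpace β] {R : α → β → Prop}
    (hR : MeasurableSet {q : α × β | R q.1 q.2}) (hcount : ∀ a, {b | R a b}.Countable) :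
    MeasurableSet {a | ∃ b, R a b} := by
  have := hR.standardBorel
  have h : {a | ∃ b, R a b} = range fun q : {q : α × β | R q.1 q.2} => q.1.1 := by
    ext a
    constructor
    · rintro ⟨b, hb⟩; exact ⟨⟨(a, b), hb⟩, rfl⟩
    · rintro ⟨⟨⟨a, b⟩, hb⟩, rfl⟩; exact ⟨b, hb⟩
  rw [h]
  refine measurableSet_range_of_countable_fibers (measurable_fst.comp measurable_subtype_coe) ?_
  intro a
  have hinj : InjOn (fun q : {q : α × β | R q.1 q.2} => q.1.2)
      ((fun q : {q : α × β | R q.1 q.2} => q.1.1) ⁻¹' {a}) := by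
    intro q hq q' hq' h
    exact Subtype.ext (Prod.ext (hq.trans hq'.symm) h)
  refine MapsTo.countable_of_injOn (t := {b | R a b}) ?_ hinj (hcount a)
  rintro ⟨⟨a', b⟩, hb⟩ rfl
  exact hb

/-! ### Gluing linearizations -/

/-- `y` lies in the `P`-downward closure of the initial segment of `L` ending at `a`. -/
def DownCut {X : Type*} (P L : X → X → Prop) (y a : X) : Prop := ∃ x, P y x ∧ L x a

/-- The preorder comparing points by the cuts `DownCut P L` which contain them. -/
def CutLE {X : Type*} (P L : X → X → Prop) (y z : X) : Prop :=
  ∀ a, DownCut P L z a → DownCut P L y a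

lemma measurableSet_cutLE {X : Type*} [MeasurableSpace X] [StandardBorelSpace X]
    {E P L : X → X → Prop} (hE : Equivalence E) (hEcount : ∀ x, {y | E x y}.Countable)
    (hPmeas : MeasurableSet {p : X × X | P p.1 p.2})
    (hLmeas : MeasurableSet {p : X × X | L p.1 p.2})
    (hPE : ∀ x y, P x y → E x y) (hLE : ∀ x y, L x y → E x y) :
    MeasurableSet {p : X × X | CutLE P L p.1 p.2} := by
  have hD : MeasurableSet {p : X × X | DownCut P L p.1 p.2} := by
    refine measurableSet_exists_of_countable (R := fun (p : X × X) x => P p.1 x ∧ L x p.2) ?_ ?_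
    · exact ((measurable_fst.fst.prodMk measurable_snd) hPmeas).inter
        ((measurable_snd.prodMk measurable_fst.snd) hLmeas)
    · exact fun p => (hEcount p.1).mono fun x hx => hPE _ _ hx.1
  have h : MeasurableSet {p : X × X | ∃ a, DownCut P L p.2 a ∧ ¬ DownCut P L p.1 a} := by
    refine measurableSet_exists_of_countable
      (R := fun (p : X × X) a => DownCut P L p.2 a ∧ ¬ DownCut P L p.1 a) ?_ ?_
    · exact ((measurable_fst.snd.prodMk measurable_snd) hD).inter
        ((measurable_fst.fst.prodMk measurable_snd) hD).compl
    · refine fun p => (hEcount p.2).mono ?_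
      rintro a ⟨⟨x, hx, hxa⟩, -⟩
      exact hE.trans (hPE _ _ hx) (hLE _ _ hxa)
  convert h.compl using 1
  ext p
  simp [CutLE]


/-- `Y` admits a Borel linearization of `P` relative to `E`: there is a Borel relation `L`
with `P ∩ (Y × Y) ⊆ L ⊆ E ∩ (Y × Y)` whose restriction to `[x]_E ∩ Y` is a linear
order for every `x ∈ Y`. -/
def HasBorelLinearization {X : Type*} [MeasurableSpace X]
    (E P : X → X → Prop) (Y : Set X) : Prop :=
  ∃ L : X → X → Prop,
    MeasurableSet {p : X × X | L p.1 p.2} ∧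
    (∀ x y, x ∈ Y → y ∈ Y → P x y → L x y) ∧
    (∀ x y, L x y → E x y ∧ x ∈ Y ∧ y ∈ Y) ∧
    (∀ x ∈ Y, L x x) ∧
    (∀ x y, L x y → L y x → x = y) ∧
    (∀ x y z, L x y → L y z → L x z) ∧
    (∀ x y, x ∈ Y → y ∈ Y → E x y → L x y ∨ L y x)

/-- For a CBER `E` and a Borel partial order `P ⊆ E` on its classes, the
collection of Borel sets admitting a Borel linearization of `P` is a σ-ideal. -/
theorem stmt_9 {X : Type*} [MeasurableSpace X] [StandardBorelSpace X]
    (E : X → X → Prop) (hE : Equivalence E)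
    (hEmeas : MeasurableSet {p : X × X | E p.1 p.2})
    (hEcount : ∀ x, {y | E x y}.Countable)
    (P : X → X → Prop)
    (hPmeas : MeasurableSet {p : X × X | P p.1 p.2})
    (hPE : ∀ x y, P x y → E x y)
    (hPrefl : ∀ x, P x x)
    (hPantisymm : ∀ x y, P x y → P y x → x = y)
    (hPtrans : ∀ x y z, P x y → P y z → P x z) :
    HasBorelLinearization E P (∅ : Set X) ∧
    (∀ Y Z : Set X, MeasurableSet Y → MeasurableSet Z → Z ⊆ Y →
      HasBorelLinearization E P Y → HasBorelLinearization E P Z) ∧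
    (∀ Y : ℕ → Set X, (∀ n, MeasurableSet (Y n)) →
      (∀ n, HasBorelLinearization E P (Y n)) →
      HasBorelLinearization E P (⋃ n, Y n)) := by
  refine ⟨⟨fun _ _ => False, by simp, by simp, by simp, by simp, by simp, by simp, by simp⟩,
    ?_, ?_⟩
  · rintro Y Z - hZ hZY ⟨L, hm, hP, hLE, hr, ha, ht, htot⟩
    refine ⟨fun x y => L x y ∧ x ∈ Z ∧ y ∈ Z, ?_, ?_, ?_, ?_, ?_, ?_, ?_⟩
    · exact hm.inter ((measurable_fst hZ).inter (measurable_snd hZ))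
    · exact fun x y hx hy h => ⟨hP x y (hZY hx) (hZY hy) h, hx, hy⟩
    · exact fun x y h => ⟨(hLE x y h.1).1, h.2⟩
    · exact fun x hx => ⟨hr x (hZY hx), hx, hx⟩
    · exact fun x y h h' => ha x y h.1 h'.1
    · exact fun x y z h h' => ⟨ht x y z h.1 h'.1, h.2.1, h'.2.2⟩
    · exact fun x y hx hy h => (htot x y (hZY hx) (hZY hy) h).imp
        (fun h => ⟨h, hx, hy⟩) (fun h => ⟨h, hy, hx⟩)
  · intro Y hY hYL
    choose L hm hP hLE hr ha ht htot using hYL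
    let Q : ℕ → X → X → Prop := fun n => CutLE P (L n)
    have hQm : ∀ n, MeasurableSet {p : X × X | Q n p.1 p.2} := fun n =>
      measurableSet_cutLE hE hEcount hPmeas (hm n) hPE (fun x y h => (hLE n x y h).1)
    have hQP : ∀ n x y, P x y → Q n x y := by
      rintro n x y h a ⟨u, hu, hua⟩
      exact ⟨u, hPtrans _ _ _ h hu, hua⟩
    have hQt : ∀ n x y z, Q n x y → Q n y z → Q n x z := fun n x y z h g a ha => h a (g a ha)
    -- the cuts of a class form a chain, because `L n` is total on the class
    have hQtot : ∀ n x y, E x y → ¬ Q n x y → Q n y x := by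
      intro n x y hxy hn b hb
      simp only [Q, CutLE, not_forall] at hn
      obtain ⟨a, ⟨u, hu, hua⟩, hxa⟩ := hn
      obtain ⟨v, hv, hvb⟩ := hb
      have hab : E a b := hE.trans (hE.symm (hE.trans (hPE _ _ hu) (hLE _ _ _ hua).1))
        (hE.trans (hE.symm hxy) (hE.trans (hPE _ _ hv) (hLE _ _ _ hvb).1))
      rcases htot n a b (hLE _ _ _ hua).2.2 (hLE _ _ _ hvb).2.2 hab with h | h
      · exact ⟨u, hu, ht n _ _ _ hua h⟩
      · exact absurd ⟨v, hv, ht n _ _ _ hvb h⟩ hxa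
    -- a point of `Y n` lies `P`-above every point having the same cuts
    have hQanti : ∀ n x y, y ∈ Y n → Q n x y → Q n y x → P x y := by
      intro n x y hy h h'
      obtain ⟨u, hu, huy⟩ := h y ⟨y, hPrefl y, hr n y hy⟩
      have huY := (hLE _ _ _ huy).2.1
      obtain ⟨v, hv, hvu⟩ := h' u ⟨u, hu, hr n u huY⟩
      have hyv := hP n y v hy (hLE _ _ _ hvu).2.1 hv
      have := ha n u y huy (ht n _ _ _ hyv hvu)
      rwa [this] at hu
    let lex : X → X → Prop := fun x y => ∀ n, (∀ m < n, Q m y x) → Q n x y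
    refine ⟨fun x y => (E x y ∧ x ∈ ⋃ n, Y n ∧ y ∈ ⋃ n, Y n) ∧ lex x y,
      ?_, ?_, ?_, ?_, ?_, ?_, ?_⟩
    · have hYm : MeasurableSet (⋃ n, Y n) := MeasurableSet.iUnion hY
      refine (hEmeas.inter ((measurable_fst hYm).inter (measurable_snd hYm))).inter ?_
      have : {p : X × X | lex p.1 p.2} = ⋂ n, ((⋂ m, ⋂ (_ : m < n),
          Prod.swap ⁻¹' {p : X × X | Q m p.1 p.2})ᶜ ∪ {p : X × X | Q n p.1 p.2}) := by
        ext p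
        simp only [lex, mem_ofPred_eq, mem_iInter, mem_union, mem_compl_iff, mem_preimage,
          imp_iff_not_or, Prod.fst_swap, Prod.snd_swap]
      change MeasurableSet {p : X × X | lex p.1 p.2}
      rw [this]
      exact MeasurableSet.iInter fun n => (MeasurableSet.iInter fun m =>
        MeasurableSet.iInter fun _ => measurable_swap (hQm m)).compl.union (hQm n)
    · exact fun x y hx hy h => ⟨⟨hPE _ _ h, hx, hy⟩, fun n _ => hQP n x y h⟩
    · exact fun x y h => h.1
    · exact fun x hx => ⟨⟨hE.refl x, hx, hx⟩, fun n _ a h => h⟩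
    · rintro x y ⟨⟨-, hx, hy⟩, h⟩ ⟨-, h'⟩
      have key : ∀ n, Q n x y ∧ Q n y x := by
        intro n
        induction n using Nat.strong_induction_on with
        | _ n ih => exact ⟨h n fun m hm => (ih m hm).2, h' n fun m hm => (ih m hm).1⟩
      obtain ⟨n, hn⟩ := mem_iUnion.1 hx
      obtain ⟨m, hm⟩ := mem_iUnion.1 hy
      exact hPantisymm x y (hQanti m x y hm (key m).1 (key m).2)
        (hQanti n y x hn (key n).2 (key n).1)
    · rintro x y z ⟨⟨hxy, hx, -⟩, h⟩ ⟨⟨hyz, -, hz⟩, h'⟩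
      refine ⟨⟨hE.trans hxy hyz, hx, hz⟩, fun n hn => ?_⟩
      -- if `z` lies below `x` at all levels before `n`, then `x`, `y`, `z` agree there
      have key : ∀ m, m < n → Q m y x ∧ Q m z y := by
        intro m
        induction m using Nat.strong_induction_on with
        | _ m ih =>
          intro hmn
          have a1 := h m fun k hk => (ih k hk (hk.trans hmn)).1
          have a2 := h' m fun k hk => (ih k hk (hk.trans hmn)).2
          exact ⟨hQt m _ _ _ a2 (hn m hmn), hQt m _ _ _ (hn m hmn) a1⟩
      exact hQt n _ _ _ (h n fun m hm => (key m hm).1) (h' n fun m hm => (key m hm).2)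
    · intro x y hx hy hxy
      by_cases hl : lex x y
      · exact Or.inl ⟨⟨hxy, hx, hy⟩, hl⟩
      · refine Or.inr ⟨⟨hE.symm hxy, hy, hx⟩, fun k hk => ?_⟩
        simp only [lex, not_forall] at hl
        obtain ⟨n, hn, hnn⟩ := hl
        rcases lt_trichotomy k n with hkn | rfl | hkn
        · exact hn k hkn
        · exact hQtot _ _ _ hxy hnn
        · exact absurd (hk n hkn) hnn
end

section
/- Let E be a hyperfinite countable Borel equivalence relation on a standard Borel space X, i.e. E = ⋃_n E_n for an increasing sequence (E_n) of Borel equivalence relations each of whose classes is finite. Let G ⊆ E be a Borel symmetric irreflexive relation such that for every E-class C, the graph (C, G restricted to C) is connected. Then there is a Borel symmetric relation T ⊆ G such that for every E-class C, the graph (C, T restricted to C) is a spanning tree of (C, G restricted to C), i.e. it is connected and acyclic with vertex set C. -/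
/-!
The tree is obtained by Kruskal's rule. The weight of an edge of `G` is the first `n` for which its
endpoints are `En n`-equivalent, ties being broken lexicographically by a Borel embedding of `X`
into `ℝ`, so that distinct edges have distinct weights. An edge is kept when its endpoints are not
joined by a path of strictly lighter edges. The kept graph is acyclic, since the heaviest edge of a
cycle would not have been kept (`kruskal_isAcyclic`). A path of edges lighter than a given edge
stays inside one finite `En n`-class, so among the edges of `G` whose endpoints are not joined by
the tree and which lie in such a class there would be a lightest one, which is absurd
(`kruskal_reachable`).

For the graph to be Borel (`measurableSet_kruskal`), quantification over the vertices of such paths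
has to preserve Borel sets. These vertices range over finite sets, so it suffices that a Borel set
with finite sections has a Borel projection (`measurableSet_image_fst_of_finite`). When the
sections have bounded size this follows from the Lusin–Souslin theorem on injective images, applied
to increasing enumerations of the sections. The general case reduces to the bounded one by
Novikov's separation theorem for sequences of analytic sets with empty intersection
(`seqSep_of_analyticSet`).
-/

open Set Function MeasureTheory

/-! ### Novikov separation -/

/-- A sequence of sets is *Borel separable* if its members have measurable supersets whose
intersection is empty. For two disjoint sets this is the usual separation by a Borel set. -/
def SeqSep {α : Type*} [MeasurableSpace α] (S : ℕ → Set α) : Prop :=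
  ∃ B : ℕ → Set α, (∀ n, MeasurableSet (B n)) ∧ (∀ n, S n ⊆ B n) ∧ ⋂ n, B n = ∅

/-- If the `i`-th set is split into countably many pieces and every resulting sequence is separable,
so was the original one. -/
lemma SeqSep.split {α : Type*} [MeasurableSpace α] {S : ℕ → Set α} {S' : ℕ → ℕ → Set α} (i : ℕ)
    (hi : S i ⊆ ⋃ v, S' v i) (hne : ∀ k, k ≠ i → ∀ v, S k ⊆ S' v k)
    (h : ∀ v, SeqSep (S' v)) : SeqSep S := by
  choose B hBm hBs hBe using h
  refine ⟨fun k => if k = i then ⋃ v, B v i else ⋂ v, B v k, fun k => ?_, fun k => ?_, ?_⟩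
  · dsimp only
    split_ifs
    · exact MeasurableSet.iUnion fun v => hBm v i
    · exact MeasurableSet.iInter fun v => hBm v k
  · dsimp only
    split_ifs with hk
    · subst hk
      exact hi.trans (iUnion_mono fun v => hBs v k)
    · exact subset_iInter fun v => (hne k hk v).trans (hBs v k)
  · rw [eq_empty_iff_forall_notMem]
    intro x hx
    rw [mem_iInter] at hx
    have h1 := hx i
    simp only [if_true, mem_iUnion] at h1
    obtain ⟨v, hv⟩ := h1
    have : x ∈ ⋂ k, B v k := by
      rw [mem_iInter]
      intro k
      by_cases hk : k = i
      · rw [hk]; exact hv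
      · have h2 := hx k
        simp only [hk, if_false, mem_iInter] at h2
        exact h2 v
    rw [hBe v] at this
    exact this

/-- Novikov's separation theorem for continuous images of Baire space: if the ranges of the `f n`
have no common point then they are Borel separable. As in Lusin's theorem, inseparability is
propagated to smaller and smaller cylinders; here all the (countably many) points of Baire space
are approximated at once, the `j`-th coordinate of the `i`-th point being decided at
step `Nat.pair i j`. -/
theorem seqSep_range {α : Type*} [TopologicalSpace α] [T2Space α] [MeasurableSpace α]
    [OpensMeasurableSpace α] (f : ℕ → (ℕ → ℕ) → α) (hf : ∀ n, Continuous (f n))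
    (h : ⋂ n, range (f n) = ∅) : SeqSep fun n => range (f n) := by
  by_contra hsep
  let S : ℕ → (ℕ → ℕ) → ℕ → Set α := fun m c i =>
    f i '' {u | ∀ j, Nat.pair i j < m → u j = c (Nat.pair i j)}
  have hScongr : ∀ m c c', (∀ k < m, c k = c' k) → S m c = S m c' := by
    intro m c c' hcc
    funext i
    have : {u : ℕ → ℕ | ∀ j, Nat.pair i j < m → u j = c (Nat.pair i j)} =
        {u | ∀ j, Nat.pair i j < m → u j = c' (Nat.pair i j)} := by
      ext u
      exact forall_congr' fun j => forall_congr' fun hj => by rw [hcc _ hj]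
    simp only [S, this]
  have step : ∀ m c, ¬ SeqSep (S m c) → ∃ v, ¬ SeqSep (S (m + 1) (update c m v)) := by
    intro m c
    contrapose!
    refine SeqSep.split (Nat.unpair m).1 ?_ ?_
    · rintro _ ⟨u, hu, rfl⟩
      refine mem_iUnion.2 ⟨u (Nat.unpair m).2, u, fun j hj => ?_, rfl⟩
      by_cases hm : Nat.pair (Nat.unpair m).1 j = m
      · have : j = (Nat.unpair m).2 := by
          have := congrArg Nat.unpair hm
          rw [Nat.unpair_pair] at this
          rw [← this]
        rw [hm, update_self, this]
      · rw [update_of_ne hm]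
        exact hu j (by omega)
    · rintro k hk v _ ⟨u, hu, rfl⟩
      refine ⟨u, fun j hj => ?_, rfl⟩
      have hm : Nat.pair k j ≠ m := by
        rintro rfl
        simp at hk
      rw [update_of_ne hm]
      exact hu j (by omega)
  choose! V hV using step
  let c : ℕ → ℕ → ℕ := fun m => Nat.rec (fun _ => 0) (fun m c => update c m (V m c)) m
  have hcs : ∀ m, c (m + 1) = update (c m) m (V m (c m)) := fun m => rfl
  have hc : ∀ m, ¬ SeqSep (S m (c m)) := by
    intro m
    induction m with
    | zero => simpa [S, image_univ] using hsep
    | succ m ih => rw [hcs]; exact hV m _ ih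
  have hstab : ∀ k m, k + 1 ≤ m → c m k = c (k + 1) k := by
    intro k
    apply Nat.le_induction
    · rfl
    · intro m hm ih
      rw [hcs, update_of_ne (by omega), ih]
  let d : ℕ → ℕ := fun k => c (k + 1) k
  have hd : ∀ m, ¬ SeqSep (S m d) := by
    intro m
    rw [← hScongr m (c m) d fun k hk => hstab k m hk]
    exact hc m
  let g : ℕ → ℕ → ℕ := fun i j => d (Nat.pair i j)
  -- The images of the limit points are not all equal, so two of them have disjoint neighbourhoods.
  obtain ⟨i, hi⟩ : ∃ i, f i (g i) ≠ f 0 (g 0) := by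
    by_contra! hall
    have : f 0 (g 0) ∈ ⋂ n, range (f n) := mem_iInter.2 fun n => ⟨g n, hall n⟩
    rw [h] at this
    exact this
  obtain ⟨U, W, hU, hW, hiU, h0W, hUW⟩ := t2_separation hi
  have key : ∀ (k : ℕ) (O : Set α), IsOpen O → f k (g k) ∈ O → ∃ M, ∀ m ≥ M, S m d k ⊆ O := by
    intro k O hO hk
    obtain ⟨_, ⟨y, n, rfl⟩, hy, hsub⟩ :=
      (PiNat.isTopologicalBasis_cylinders (fun _ : ℕ => ℕ)).exists_subset_of_mem_open
        (show g k ∈ f k ⁻¹' O from hk) (hO.preimage (hf k))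
    refine ⟨Nat.pair k n, fun m hm => ?_⟩
    rintro _ ⟨u, hu, rfl⟩
    apply hsub
    rw [PiNat.mem_cylinder_iff] at hy ⊢
    intro j hj
    rw [← hy j hj]
    exact hu j ((Nat.pair_lt_pair_right k hj).trans_le hm)
  obtain ⟨M, hM⟩ := key i U hU hiU
  obtain ⟨M', hM'⟩ := key 0 W hW h0W
  have hi0 : i ≠ 0 := by
    rintro rfl
    exact hi rfl
  refine hd (max M M') ⟨fun k => if k = i then U else if k = 0 then W else univ, ?_, ?_, ?_⟩
  · intro k
    dsimp only
    split_ifs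
    exacts [hU.measurableSet, hW.measurableSet, MeasurableSet.univ]
  · intro k
    dsimp only
    split_ifs with h1 h2
    · subst h1; exact hM _ (le_max_left _ _)
    · subst h2; exact hM' _ (le_max_right _ _)
    · exact subset_univ _
  · rw [eq_empty_iff_forall_notMem]
    intro x hx
    rw [mem_iInter] at hx
    have h1 := hx i
    have h2 := hx 0
    simp only [if_true, hi0.symm, if_false] at h1 h2
    exact hUW.le_bot ⟨h1, h2⟩

/-- Novikov's separation theorem for analytic sets. -/
theorem seqSep_of_analyticSet {α : Type*} [TopologicalSpace α] [T2Space α] [MeasurableSpace α]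
    [OpensMeasurableSpace α] (A : ℕ → Set α) (hA : ∀ n, AnalyticSet (A n))
    (h : ⋂ n, A n = ∅) : SeqSep A := by
  by_cases he : ∃ i, A i = ∅
  · obtain ⟨i, hi⟩ := he
    refine ⟨fun k => if k = i then ∅ else univ, ?_, ?_, ?_⟩
    · intro k
      dsimp only
      split_ifs
      exacts [MeasurableSet.empty, MeasurableSet.univ]
    · intro k
      dsimp only
      split_ifs with h1
      · rw [h1, hi]
      · exact subset_univ _
    · rw [eq_empty_iff_forall_notMem]
      intro x hx
      simpa using mem_iInter.1 hx i
  · push Not at he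
    have : ∀ n, ∃ f : (ℕ → ℕ) → α, Continuous f ∧ range f = A n := by
      intro n
      have := hA n
      rw [AnalyticSet] at this
      exact this.resolve_left (he n).ne_empty
    choose f hf hfA using this
    have hA' : A = fun n => range (f n) := funext fun n => (hfA n).symm
    subst hA'
    exact seqSep_range f hf h

/-! ### Projections of Borel sets with finite sections -/

/-- The pairs `(x, y)` for which `y` lists, in the increasing order induced by `e`, some `k` points
of the section of `A` at `x`. -/
def chains {X Y : Type*} (e : Y → ℝ) (A : Set (X × Y)) (k : ℕ) : Set (X × (Fin k → Y)) :=
  {q | StrictMono (e ∘ q.2) ∧ ∀ i, (q.1, q.2 i) ∈ A}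

lemma measurableSet_chains {X Y : Type*} [MeasurableSpace X] [MeasurableSpace Y] {e : Y → ℝ}
    (he : Measurable e) {A : Set (X × Y)} (hA : MeasurableSet A) (k : ℕ) :
    MeasurableSet (chains e A k) := by
  have h1 : MeasurableSet {q : X × (Fin k → Y) | ∀ i j, i < j → e (q.2 i) < e (q.2 j)} := by
    simp only [Set.ofPred_forall]
    refine MeasurableSet.iInter fun i => MeasurableSet.iInter fun j =>
      MeasurableSet.iInter fun _ => ?_
    exact measurableSet_lt (he.comp ((measurable_pi_apply i).comp measurable_snd))
      (he.comp ((measurable_pi_apply j).comp measurable_snd))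
  have h2 : MeasurableSet {q : X × (Fin k → Y) | ∀ i, (q.1, q.2 i) ∈ A} := by
    simp only [Set.ofPred_forall]
    refine MeasurableSet.iInter fun i => ?_
    exact (measurable_fst.prodMk ((measurable_pi_apply i).comp measurable_snd)) hA
  have : chains e A k = {q : X × (Fin k → Y) | ∀ i j, i < j → e (q.2 i) < e (q.2 j)} ∩
      {q : X × (Fin k → Y) | ∀ i, (q.1, q.2 i) ∈ A} := by
    ext q
    exact Iff.rfl
  rw [this]
  exact h1.inter h2

lemma ncard_range_of_mem_chains {X Y : Type*} {e : Y → ℝ} {A : Set (X × Y)} {k : ℕ}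
    {q : X × (Fin k → Y)} (hq : q ∈ chains e A k) : (range q.2).ncard = k := by
  have hinj : Injective q.2 := hq.1.injective.of_comp
  rw [← image_univ, ncard_image_of_injective _ hinj, ncard_univ, Nat.card_fin]

lemma mem_image_chains_iff {X Y : Type*} {e : Y → ℝ} (he : Injective e) {A : Set (X × Y)} {x : X}
    (hfin : {y | (x, y) ∈ A}.Finite) (k : ℕ) :
    x ∈ Prod.fst '' chains e A k ↔ k ≤ {y | (x, y) ∈ A}.ncard := by
  constructor
  · rintro ⟨⟨x, y⟩, hq, rfl⟩
    refine (ncard_range_of_mem_chains hq).symm.trans_le (ncard_le_ncard ?_ hfin)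
    rintro _ ⟨i, rfl⟩
    exact hq.2 i
  · intro hk
    obtain ⟨t, ht, htk⟩ := exists_subset_card_eq hk
    have htf : t.Finite := hfin.subset ht
    have hcard : (htf.toFinset.image e).card = k := by
      rw [Finset.card_image_of_injective _ he, ← htk, ncard_eq_toFinset_card t htf]
    let o := (htf.toFinset.image e).orderEmbOfFin hcard
    have ho : ∀ i, ∃ y ∈ t, e y = o i := by
      intro i
      have := Finset.orderEmbOfFin_mem (htf.toFinset.image e) hcard i
      obtain ⟨y, hy, hyo⟩ := Finset.mem_image.1 this
      exact ⟨y, htf.mem_toFinset.1 hy, hyo⟩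
    choose y hyt hyo using ho
    refine ⟨(x, y), ⟨?_, fun i => ht (hyt i)⟩, rfl⟩
    have : e ∘ y = o := funext hyo
    rw [this]
    exact o.strictMono

/-- Projections of Borel sets whose sections have at most `k` points are Borel, by induction on
`k`: if the sections have at most `k + 1` points, the base points with exactly `k + 1` points
in their section are an injective image of the Borel set of increasing enumerations, hence form a Borel set by the Lusin–Souslin theorem. -/
lemma measurableSet_image_fst_of_ncard_le {X Y : Type*} [MeasurableSpace X] [StandardBorelSpace X]
    [MeasurableSpace Y] [StandardBorelSpace Y] (k : ℕ) : ∀ A : Set (X × Y), MeasurableSet A →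
    (∀ x, {y | (x, y) ∈ A}.Finite) → (∀ x, {y | (x, y) ∈ A}.ncard ≤ k) →
    MeasurableSet (Prod.fst '' A) := by
  have he := measurableEmbedding_embeddingReal Y
  set e := embeddingReal Y
  induction k with
  | zero =>
    intro A _ hfin hk
    have : A = ∅ := by
      rw [eq_empty_iff_forall_notMem]
      rintro ⟨x, y⟩ hxy
      have := (ncard_eq_zero (hfin x)).1 (Nat.le_zero.1 (hk x))
      exact (this ▸ (show y ∈ {y | (x, y) ∈ A} from hxy) : y ∈ (∅ : Set Y))
    simp [this]
  | succ k ih =>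
    intro A hA hfin hk
    set R := Prod.fst '' chains e A (k + 1) with hR
    have hRm : MeasurableSet R := by
      refine (measurableSet_chains he.measurable hA _).image_of_measurable_injOn measurable_fst ?_
      rintro ⟨x, y⟩ hq ⟨x', y'⟩ hq' hxx
      obtain rfl : x = x' := hxx
      have hsec : ∀ z : Fin (k + 1) → Y, (x, z) ∈ chains e A (k + 1) →
          range z = {y | (x, y) ∈ A} := by
        intro z hz
        refine eq_of_subset_of_ncard_le ?_ ?_ (hfin x)
        · rintro _ ⟨i, rfl⟩
          exact hz.2 i
        · rw [ncard_range_of_mem_chains hz]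
          exact hk x
      have hrange : range (e ∘ y) = range (e ∘ y') := by
        rw [range_comp, range_comp, hsec y hq, hsec y' hq']
      have := (hq.1.range_inj hq'.1).1 hrange
      exact Prod.ext rfl (he.injective.comp_left this)
    have hA' : MeasurableSet (A \ Prod.fst ⁻¹' R) := hA.diff (measurable_fst hRm)
    have hsub : ∀ x, {y | (x, y) ∈ A \ Prod.fst ⁻¹' R} ⊆ {y | (x, y) ∈ A} := fun x y hy => hy.1
    have h1 := ih _ hA' (fun x => (hfin x).subset (hsub x)) (fun x => by
      by_cases hx : x ∈ R
      · have : {y | (x, y) ∈ A \ Prod.fst ⁻¹' R} = ∅ := by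
          rw [eq_empty_iff_forall_notMem]
          intro y hy
          exact hy.2 hx
        rw [this, ncard_empty]
        exact Nat.zero_le _
      · have h2 := ncard_le_ncard (hsub x) (hfin x)
        rw [hR, mem_image_chains_iff he.injective (hfin x)] at hx
        omega)
    have : Prod.fst '' A = R ∪ Prod.fst '' (A \ Prod.fst ⁻¹' R) := by
      ext x
      constructor
      · rintro ⟨⟨x, y⟩, hxy, rfl⟩
        by_cases hx : x ∈ R
        · exact Or.inl hx
        · exact Or.inr ⟨(x, y), ⟨hxy, hx⟩, rfl⟩
      · rintro (⟨⟨x, y⟩, hq, rfl⟩ | ⟨q, hq, rfl⟩)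
        · exact ⟨(x, y 0), hq.2 0, rfl⟩
        · exact ⟨q, hq.1, rfl⟩
    rw [this]
    exact hRm.union h1

/-- Projections of Borel sets with finite sections are Borel. The sets of points whose section has
at least `k` elements are analytic with empty intersection, so Novikov's theorem covers the base by
countably many Borel sets over each of which the sections have bounded size. -/
theorem measurableSet_image_fst_of_finite {X Y : Type*} [MeasurableSpace X] [StandardBorelSpace X]
    [MeasurableSpace Y] [StandardBorelSpace Y] (A : Set (X × Y)) (hA : MeasurableSet A)
    (hfin : ∀ x, {y | (x, y) ∈ A}.Finite) : MeasurableSet (Prod.fst '' A) := by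
  have he := measurableEmbedding_embeddingReal Y
  set e := embeddingReal Y
  let R : ℕ → Set X := fun k => Prod.fst '' chains e A k
  have hsep : SeqSep R := by
    let := upgradeStandardBorel X
    refine seqSep_of_analyticSet R
      (fun k => (measurableSet_chains he.measurable hA k).analyticSet_image measurable_fst) ?_
    rw [eq_empty_iff_forall_notMem]
    intro x hx
    have := mem_iInter.1 hx ({y | (x, y) ∈ A}.ncard + 1)
    rw [mem_image_chains_iff he.injective (hfin x)] at this
    omega
  obtain ⟨B, hBm, hRB, hB⟩ := hsep
  have : Prod.fst '' A = ⋃ k, Prod.fst '' (A \ Prod.fst ⁻¹' B k) := by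
    ext x
    simp only [mem_iUnion]
    constructor
    · rintro ⟨q, hq, rfl⟩
      have : q.1 ∉ ⋂ k, B k := by simp [hB]
      rw [mem_iInter] at this
      push Not at this
      obtain ⟨k, hk⟩ := this
      exact ⟨k, q, ⟨hq, hk⟩, rfl⟩
    · rintro ⟨k, q, hq, rfl⟩
      exact ⟨q, hq.1, rfl⟩
  rw [this]
  refine MeasurableSet.iUnion fun k => ?_
  have hsub : ∀ x, {y | (x, y) ∈ A \ Prod.fst ⁻¹' B k} ⊆ {y | (x, y) ∈ A} := fun x y hy => hy.1
  refine measurableSet_image_fst_of_ncard_le k _ (hA.diff (measurable_fst (hBm k)))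
    (fun x => (hfin x).subset (hsub x)) fun x => ?_
  by_cases hx : x ∈ B k
  · have : {y | (x, y) ∈ A \ Prod.fst ⁻¹' B k} = ∅ := by
      rw [eq_empty_iff_forall_notMem]
      intro y hy
      exact hy.2 hx
    rw [this, ncard_empty]
    exact Nat.zero_le _
  · have h1 : x ∉ R k := fun h => hx (hRB k h)
    have h2 := ncard_le_ncard (hsub x) (hfin x)
    rw [mem_image_chains_iff he.injective (hfin x)] at h1
    omega

/-! ### Kruskal's rule -/

/-- The step relation along edges of `G` that are strictly lighter than `p`. -/
def Lighter {X Λ : Type*} [LT Λ] (G : X → X → Prop) (W : X × X → Λ) (p : X × X) (w z : X) : Prop :=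
  G w z ∧ W (w, z) < W p

/-- The Kruskal graph of the weighted graph `(G, W)`: an edge is kept unless its endpoints are
already joined by a path of strictly lighter edges. -/
def kruskal {X Λ : Type*} [LT Λ] (G : X → X → Prop) (W : X × X → Λ)
    (hGsym : ∀ x y, G x y → G y x) (hGirr : ∀ x, ¬ G x x) (hW : ∀ x y, W (x, y) = W (y, x)) :
    SimpleGraph X where
  Adj x y := G x y ∧ ¬ Relation.ReflTransGen (Lighter G W (x, y)) x y
  symm := ⟨by
    rintro x y ⟨h, hn⟩
    refine ⟨hGsym _ _ h, fun hp => hn ?_⟩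
    rw [← Relation.reflTransGen_swap]
    refine Relation.ReflTransGen.mono (fun a b hab => ?_) _ _ hp
    exact ⟨hGsym _ _ hab.1, by rw [hW b a, hW x y]; exact hab.2⟩⟩
  loopless := ⟨fun x h => hGirr x h.1⟩

lemma reflTransGen_of_reachable {X : Type*} {H : SimpleGraph X} {r : X → X → Prop}
    (h : ∀ a b, H.Adj a b → r a b) {x y : X} (hxy : H.Reachable x y) :
    Relation.ReflTransGen r x y :=
  Relation.ReflTransGen.mono h _ _ ((SimpleGraph.reachable_iff_reflTransGen x y).1 hxy)

/-- When distinct edges have distinct weights, the heaviest edge of a cycle has its endpoints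
joined by the lighter rest of the cycle, so it is not an edge of the Kruskal graph. -/
lemma kruskal_isAcyclic {X Λ : Type*} [LinearOrder Λ] (G : X → X → Prop) (W : X × X → Λ)
    (hGsym : ∀ x y, G x y → G y x) (hGirr : ∀ x, ¬ G x x) (hW : ∀ x y, W (x, y) = W (y, x))
    (hinj : ∀ x y x' y', G x y → G x' y' → W (x, y) = W (x', y') → s(x, y) = s(x', y')) :
    (kruskal G W hGsym hGirr hW).IsAcyclic := by
  intro v c hc
  let D : Set (X × X) := {q | s(q.1, q.2) ∈ c.edges}
  have hDG : ∀ q ∈ D, (kruskal G W hGsym hGirr hW).Adj q.1 q.2 := fun q hq => c.adj_of_mem_edges hq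
  have hDfin : D.Finite := by
    refine ((c.support.finite_toSet).prod (c.support.finite_toSet)).subset ?_
    intro q hq
    exact ⟨c.fst_mem_support_of_mem_edges hq, c.snd_mem_support_of_mem_edges hq⟩
  have hDne : D.Nonempty := by
    cases c with
    | nil => exact absurd rfl hc.ne_nil
    | cons h p => exact ⟨(v, _), List.mem_cons_self⟩
  obtain ⟨⟨x, y⟩, hxyD, hmax⟩ := exists_max_image D W hDfin hDne
  let H := SimpleGraph.fromEdgeSet {e | e ∈ c.edges}
  have hHc : ∀ e ∈ c.edges, e ∈ H.edgeSet := by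
    intro e he
    rw [SimpleGraph.edgeSet_fromEdgeSet]
    exact ⟨he, fun hd => SimpleGraph.not_isDiag_of_mem_edgeSet _
      (c.edges_subset_edgeSet he) hd⟩
  have hreach := (SimpleGraph.adj_and_reachable_delete_edges_iff_exists_cycle (G := H)
    (v := x) (w := y)).2 ⟨v, c.transfer H hHc, hc.transfer hHc, by
      rw [SimpleGraph.Walk.edges_transfer]; exact hxyD⟩
  refine (hDG _ hxyD).2 (reflTransGen_of_reachable ?_ hreach.2)
  intro a b hab
  rw [SimpleGraph.deleteEdges_adj, SimpleGraph.fromEdgeSet_adj] at hab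
  have habD : (a, b) ∈ D := hab.1.1
  refine ⟨(hDG _ habD).1, lt_of_le_of_ne (hmax _ habD) fun heq => hab.2 ?_⟩
  exact hinj _ _ _ _ (hDG _ habD).1 (hDG _ hxyD).1 heq

lemma exists_step_not {X : Type*} {r s : X → X → Prop} (hs : Equivalence s) {x y : X}
    (h : Relation.ReflTransGen r x y) (hn : ¬ s x y) :
    ∃ a b, Relation.ReflTransGen r x a ∧ r a b ∧ ¬ s a b := by
  by_contra! hall
  apply hn
  induction h with
  | refl => exact hs.refl _
  | tail hab hbc ih => exact hs.trans (by_contra fun hxb => hxb (ih hxb)) (hall _ _ hab hbc)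

/-- If only finitely many points can be reached from an edge through lighter edges, the Kruskal
graph joins the endpoints of every edge of `G`: a lightest bad edge would be joined by a path of
lighter, hence good, edges. -/
lemma kruskal_reachable {X Λ : Type*} [LinearOrder Λ] (G : X → X → Prop) (W : X × X → Λ)
    (hGsym : ∀ x y, G x y → G y x) (hGirr : ∀ x, ¬ G x x) (hW : ∀ x y, W (x, y) = W (y, x))
    (hfin : ∀ p : X × X, {z | Relation.ReflTransGen (Lighter G W p) p.1 z}.Finite)
    (x y : X) (hxy : G x y) : (kruskal G W hGsym hGirr hW).Reachable x y := by
  set T := kruskal G W hGsym hGirr hW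
  let K : X × X → Set (X × X) := fun p =>
    {q | Relation.ReflTransGen (Lighter G W p) p.1 q.1 ∧ Lighter G W p q.1 q.2 ∧
      ¬ T.Reachable q.1 q.2}
  have hKne : ∀ p : X × X, G p.1 p.2 → ¬ T.Reachable p.1 p.2 → (K p).Nonempty := by
    rintro ⟨a, b⟩ hG hn
    have hpath : Relation.ReflTransGen (Lighter G W (a, b)) a b := by
      by_contra hno
      exact hn (SimpleGraph.Adj.reachable ⟨hG, hno⟩)
    obtain ⟨c, d, h1, h2, h3⟩ := exists_step_not T.reachable_is_equivalence hpath hn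
    exact ⟨(c, d), h1, h2, h3⟩
  by_contra hbad
  have hKfin : (K (x, y)).Finite := by
    refine ((hfin (x, y)).prod (hfin (x, y))).subset ?_
    rintro q ⟨h1, h2, -⟩
    exact ⟨h1, h1.tail h2⟩
  obtain ⟨q, hq, hmin⟩ := exists_min_image _ W hKfin (hKne (x, y) hxy hbad)
  obtain ⟨q', h1, h2, h3⟩ := hKne q hq.2.1.1 hq.2.2
  refine (hmin q' ⟨?_, ⟨h2.1, h2.2.trans hq.2.1.2⟩, h3⟩).not_gt h2.2
  exact hq.1.trans
    (Relation.ReflTransGen.mono (fun a b hab => ⟨hab.1, hab.2.trans hq.2.1.2⟩) _ _ h1)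

/-- Under the same finiteness condition, the Kruskal graph of a Borel weighted graph is Borel: the
pairs `(p, z)` with `z` reachable from `p` in `m` lighter steps form a Borel set by induction on
`m`, each step being a projection with finite sections. -/
lemma measurableSet_kruskal {X Λ : Type*} [MeasurableSpace X] [StandardBorelSpace X]
    [LinearOrder Λ] (G : X → X → Prop) (W : X × X → Λ)
    (hGsym : ∀ x y, G x y → G y x) (hGirr : ∀ x, ¬ G x x) (hW : ∀ x y, W (x, y) = W (y, x))
    (hfin : ∀ p : X × X, {z | Relation.ReflTransGen (Lighter G W p) p.1 z}.Finite)
    (hGm : MeasurableSet {p : X × X | G p.1 p.2})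
    (hWm : MeasurableSet {r : (X × X) × (X × X) | W r.1 < W r.2}) :
    MeasurableSet {p : X × X | (kruskal G W hGsym hGirr hW).Adj p.1 p.2} := by
  let P : ℕ → Set ((X × X) × X) := fun m => Nat.rec {r | r.2 = r.1.1}
    (fun _ Q => {r | ∃ w, (r.1, w) ∈ Q ∧ Lighter G W r.1 w r.2}) m
  have hPs : ∀ m, P (m + 1) = {r | ∃ w, (r.1, w) ∈ P m ∧ Lighter G W r.1 w r.2} := fun m => rfl
  have hPpath : ∀ m p z, (p, z) ∈ P m → Relation.ReflTransGen (Lighter G W p) p.1 z := by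
    intro m
    induction m with
    | zero =>
      intro p z h
      have : z = p.1 := h
      rw [this]
    | succ m ih =>
      rintro p z ⟨w, hw, hl⟩
      exact (ih p w hw).tail hl
  have hpathP : ∀ p z, Relation.ReflTransGen (Lighter G W p) p.1 z → ∃ m, (p, z) ∈ P m := by
    intro p z h
    induction h with
    | refl => exact ⟨0, rfl⟩
    | tail _ hl ih =>
      obtain ⟨m, hm⟩ := ih
      exact ⟨m + 1, _, hm, hl⟩
  have hPm : ∀ m, MeasurableSet (P m) := by
    intro m
    induction m with
    | zero => exact measurableSet_eq_fun measurable_snd (measurable_fst.comp measurable_fst)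
    | succ m ih =>
      let A : Set (((X × X) × X) × X) := {r | (r.1.1, r.2) ∈ P m ∧ Lighter G W r.1.1 r.2 r.1.2}
      have hpair : Measurable fun r : ((X × X) × X) × X => (r.2, r.1.2) := by fun_prop
      have hA : MeasurableSet A := by
        have h1 : Measurable fun r : ((X × X) × X) × X => (r.1.1, r.2) := by fun_prop
        have h3 : Measurable fun r : ((X × X) × X) × X => ((r.2, r.1.2), r.1.1) := by fun_prop
        exact (h1 ih).inter ((hpair hGm).inter (h3 hWm))
      have : P (m + 1) = Prod.fst '' A := by
        rw [hPs]
        ext r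
        constructor
        · rintro ⟨w, hw⟩
          exact ⟨(r, w), hw, rfl⟩
        · rintro ⟨⟨r, w⟩, hw, rfl⟩
          exact ⟨w, hw⟩
      rw [this]
      exact measurableSet_image_fst_of_finite A hA fun r =>
        (hfin r.1).subset fun w hw => hPpath m _ _ hw.1
  have : {p : X × X | (kruskal G W hGsym hGirr hW).Adj p.1 p.2} =
      {p : X × X | G p.1 p.2} \ ⋃ m, (fun p : X × X => (p, p.2)) ⁻¹' P m := by
    ext p
    refine and_congr_right fun _ => not_congr ?_
    rw [mem_iUnion]
    exact ⟨fun h => hpathP p p.2 h, fun ⟨m, hm⟩ => hPpath m p p.2 hm⟩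
  rw [this]
  refine hGm.diff (MeasurableSet.iUnion fun m => ?_)
  exact (measurable_id.prodMk measurable_snd) (hPm m)

/-! ### The weight from hyperfiniteness -/

/-- If `E` is a hyperfinite CBER (an increasing union of finite Borel
equivalence relations) and `G ⊆ E` is a Borel graph whose restriction to each `E`-class
is connected, then there is a Borel spanning tree: a Borel subgraph `T ⊆ G` whose
restriction to each `E`-class is a spanning tree. -/
theorem stmt_12 {X : Type*} [MeasurableSpace X] [StandardBorelSpace X]
    (E : X → X → Prop) (hE : Equivalence E)
    (hEmeas : MeasurableSet {p : X × X | E p.1 p.2})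
    (hEcount : ∀ x, {y | E x y}.Countable)
    (En : ℕ → X → X → Prop)
    (hEn : ∀ n, Equivalence (En n))
    (hEnmeas : ∀ n, MeasurableSet {p : X × X | En n p.1 p.2})
    (hEnfin : ∀ n x, {y | En n x y}.Finite)
    (hmono : ∀ n x y, En n x y → En (n + 1) x y)
    (hunion : ∀ x y, E x y ↔ ∃ n, En n x y)
    (G : X → X → Prop)
    (hGmeas : MeasurableSet {p : X × X | G p.1 p.2})
    (hGsym : ∀ x y, G x y → G y x)
    (hGirr : ∀ x, ¬ G x x)
    (hGE : ∀ x y, G x y → E x y)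
    (hGconn : ∀ x y, E x y → Relation.ReflTransGen G x y) :
    ∃ T : SimpleGraph X,
      MeasurableSet {p : X × X | T.Adj p.1 p.2} ∧
      (∀ x y, T.Adj x y → G x y) ∧
      (∀ x y, E x y → T.Reachable x y) ∧
      T.IsAcyclic := by
  classical
  have he := measurableEmbedding_embeddingReal X
  set e := embeddingReal X
  -- The disjunct `¬ E` makes the level total; its value off `E` plays no role.
  have hex : ∀ p : X × X, ∃ n, En n p.1 p.2 ∨ ¬ E p.1 p.2 := by
    intro p
    by_cases h : E p.1 p.2
    · obtain ⟨n, hn⟩ := (hunion _ _).1 h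
      exact ⟨n, Or.inl hn⟩
    · exact ⟨0, Or.inr h⟩
  let lev : X × X → ℕ := fun p => Nat.find (hex p)
  have hlevm : Measurable lev := measurable_find hex fun k => (hEnmeas k).union hEmeas.compl
  have hlev : ∀ x y, G x y → En (lev (x, y)) x y := fun x y h =>
    (Nat.find_spec (hex (x, y))).resolve_right fun h' => h' (hGE x y h)
  have hlevs : ∀ x y, lev (x, y) = lev (y, x) := by
    intro x y
    refine Nat.find_congr' ?_
    intro n
    have h1 : En n x y ↔ En n y x := ⟨(hEn n).symm, (hEn n).symm⟩
    have h2 : E x y ↔ E y x := ⟨hE.symm, hE.symm⟩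
    simp only [h1, h2]
  have hmono' : ∀ m n x y, m ≤ n → En m x y → En n x y := by
    intro m n x y hmn h
    induction n, hmn using Nat.le_induction with
    | base => exact h
    | succ n _ ih => exact hmono _ _ _ ih
  let W : X × X → ℕ ×ₗ (ℝ ×ₗ ℝ) := fun p =>
    toLex (lev p, toLex (min (e p.1) (e p.2), max (e p.1) (e p.2)))
  have hWlt : ∀ p q, W p < W q ↔ lev p < lev q ∨ lev p = lev q ∧
      (min (e p.1) (e p.2) < min (e q.1) (e q.2) ∨
        min (e p.1) (e p.2) = min (e q.1) (e q.2) ∧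
        max (e p.1) (e p.2) < max (e q.1) (e q.2)) := by
    intro p q
    simp only [W, Prod.Lex.toLex_lt_toLex]
  have hWsym : ∀ x y, W (x, y) = W (y, x) := by
    intro x y
    simp only [W, hlevs x y, min_comm (e x), max_comm (e x)]
  have hWinj : ∀ x y x' y', W (x, y) = W (x', y') → s(x, y) = s(x', y') := by
    intro x y x' y' h
    have h1 := (Prod.mk.inj (toLex.injective (Prod.mk.inj (toLex.injective h)).2))
    have h2 : e x = e x' ∧ e y = e y' ∨ e x = e y' ∧ e y = e x' := by grind
    rw [Sym2.eq_iff]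
    rcases h2 with ⟨a, b⟩ | ⟨a, b⟩
    · exact Or.inl ⟨he.injective a, he.injective b⟩
    · exact Or.inr ⟨he.injective a, he.injective b⟩
  have hWm : MeasurableSet {r : (X × X) × (X × X) | W r.1 < W r.2} := by
    have hem := he.measurable
    have l1 : Measurable fun r : (X × X) × (X × X) => lev r.1 := hlevm.comp measurable_fst
    have l2 : Measurable fun r : (X × X) × (X × X) => lev r.2 := hlevm.comp measurable_snd
    have a1 : Measurable fun r : (X × X) × (X × X) => min (e r.1.1) (e r.1.2) := by fun_prop
    have a2 : Measurable fun r : (X × X) × (X × X) => min (e r.2.1) (e r.2.2) := by fun_prop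
    have b1 : Measurable fun r : (X × X) × (X × X) => max (e r.1.1) (e r.1.2) := by fun_prop
    have b2 : Measurable fun r : (X × X) × (X × X) => max (e r.2.1) (e r.2.2) := by fun_prop
    simp only [hWlt]
    exact (measurableSet_lt l1 l2).union ((measurableSet_eq_fun l1 l2).inter
      ((measurableSet_lt a1 a2).union ((measurableSet_eq_fun a1 a2).inter
        (measurableSet_lt b1 b2))))
  -- Lighter edges have no larger level, so light paths stay in one finite class.
  have hfin : ∀ p : X × X, {z | Relation.ReflTransGen (Lighter G W p) p.1 z}.Finite := by
    intro p
    refine (hEnfin (lev p) p.1).subset ?_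
    intro z hz
    change En (lev p) p.1 z
    induction hz with
    | refl => exact (hEn _).refl _
    | tail _ hl ih =>
      refine (hEn _).trans ih (hmono' _ _ _ _ ?_ (hlev _ _ hl.1))
      rcases (hWlt _ _).1 hl.2 with h | h
      exacts [h.le, h.1.le]
  refine ⟨kruskal G W hGsym hGirr hWsym,
    measurableSet_kruskal G W hGsym hGirr hWsym hfin hGmeas hWm, fun x y h => h.1, ?_,
    kruskal_isAcyclic G W hGsym hGirr hWsym fun x y x' y' _ _ => hWinj x y x' y'⟩
  intro x y hxy
  have hpath := hGconn x y hxy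
  clear hxy
  induction hpath with
  | refl => exact SimpleGraph.Reachable.refl _
  | tail _ h ih => exact ih.trans (kruskal_reachable G W hGsym hGirr hWsym hfin _ _ h)
end

section
/- Fix d ≥ 3 and a countably infinite group Γ. Let K_d(Γ) ⊆ 2^(Γ×Γ) be the set of symmetric irreflexive relations G on Γ that are connected, bipartite, d-regular graphs with vertex set Γ, equipped with the subspace topology from 2^(Γ×Γ). Then the set of one-ended graphs is comeagre in K_d(Γ), where a connected graph G with vertex set Γ is one-ended if for every finite set F ⊆ Γ, exactly one connected component of the restriction of G to Γ \ F is infinite. -/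
/-! Why the theorem is true.

A connected locally finite infinite graph `G` always has an infinite component off a finite set
`F`: if `F` is nonempty, every component off `F` meets the finite set of neighbours of `F`
(`exists_infinite_component`). So failure of one-endedness means that, for some finite `F` and some
`x, y ∉ F`, the components of `x` and `y` in `G` off `F` are infinite and different. There are
countably many triples `(F, x, y)`, and for each one this bad set is closed and has empty interior.

*Closed.* Being joined off `F` is witnessed by finitely many edges. Having a finite component `C`
off `F` is also an open condition: by `d`-regularity the finitely many edges of `G` at `C` force
all neighbourhoods of points of `C` in any graph that contains these edges.

*Empty interior.* Let `S` be a finite set on which `G` is to be kept. Pick an edge `ab` at a vertex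
`a ∉ S` of the component of `x`, and an edge `ce` at a vertex of the component of `y` outside `S`,
oriented so that `a` and `c` lie on the same side of the bipartition. Delete both edges, add a
disjoint copy of `K_{d,d}` minus two disjoint edges `u₀v₀`, `u₁v₁`, and join `a, b, c, e` to
`u₀, v₀, u₁, v₁` respectively. The result is bipartite and `d`-regular. As `d ≥ 3` the gadget is
connected, since `u₂` and `v₂` see the whole opposite side; so the graph stays connected and `x`,
`y` become joined off `F` through the gadget. Relabelling by a bijection
`Γ ⊕ gadget ≃ Γ` that fixes `S` gives a graph on `Γ` (`exists_joining`). -/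

/-- `G` contains no cycle of odd length. -/
def NoOddCycle {Γ : Type*} (G : Γ × Γ → Bool) : Prop :=
  ∀ n : ℕ, Odd n → ¬ ∃ w : ℕ → Γ, w n = w 0 ∧
    (∀ i < n, G (w i, w (i + 1)) = true) ∧
    (∀ i j, i < j → j < n → w i ≠ w j)

/-- `G` codes a connected, bipartite, `d`-regular graph on `Γ`. -/
def IsKdGraph {Γ : Type*} (d : ℕ) (G : Γ × Γ → Bool) : Prop :=
  (∀ x y, G (x, y) = G (y, x)) ∧
  (∀ x, G (x, x) = false) ∧
  (∀ x y : Γ, Relation.ReflTransGen (fun a b => G (a, b) = true) x y) ∧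
  (∀ x : Γ, {y : Γ | G (x, y) = true}.encard = (d : ℕ∞)) ∧
  NoOddCycle G

/-- `G` is one-ended: for every finite `F ⊆ Γ`, exactly one connected component of the
restriction of `G` to `Γ \ F` is infinite. -/
def OneEnded {Γ : Type*} (G : Γ × Γ → Bool) : Prop :=
  ∀ F : Set Γ, F.Finite →
    (∃ x, x ∉ F ∧
      {y : Γ | Relation.ReflTransGen
        (fun a b => a ∉ F ∧ b ∉ F ∧ G (a, b) = true) x y}.Infinite) ∧
    (∀ x y : Γ, x ∉ F → y ∉ F →
      {z : Γ | Relation.ReflTransGen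
        (fun a b => a ∉ F ∧ b ∉ F ∧ G (a, b) = true) x z}.Infinite →
      {z : Γ | Relation.ReflTransGen
        (fun a b => a ∉ F ∧ b ∉ F ∧ G (a, b) = true) y z}.Infinite →
      Relation.ReflTransGen (fun a b => a ∉ F ∧ b ∉ F ∧ G (a, b) = true) x y)

/-! ### Bipartiteness as a two-colouring -/

/-- Without odd cycles there are no odd closed walks: a closed walk with a repeated vertex splits
into two shorter closed walks, one of which is odd. -/
lemma no_odd_closed_walk {V : Type*} {G : V × V → Bool} (h : NoOddCycle G) (n : ℕ) :
    Odd n → ∀ w : ℕ → V, w n = w 0 → ¬ ∀ i < n, G (w i, w (i + 1)) = true := by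
  induction n using Nat.strong_induction_on with
  | _ n ih =>
    intro hn w hw hadj
    by_cases hinj : ∀ i j, i < j → j < n → w i ≠ w j
    · exact h n hn ⟨w, hw, hadj, hinj⟩
    push Not at hinj
    obtain ⟨i, j, hij, hjn, hwij⟩ := hinj
    rcases Nat.even_or_odd (j - i) with hev | hodd
    · have hodd : Odd (n - (j - i)) := by
        rw [Nat.odd_sub (by omega)]; simp [hn, hev]
      refine ih _ (by omega) hodd (fun k => if k ≤ i then w k else w (k + (j - i))) ?_ ?_
      · have h1 : ¬ (n - (j - i) ≤ i) := by omega
        have h2 : n - (j - i) + (j - i) = n := by omega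
        simp [h1, h2, hw]
      · intro k hk
        rcases lt_trichotomy k i with hki | hki | hki
        · have h1 : k ≤ i := by omega
          have h2 : k + 1 ≤ i := by omega
          simpa [h1, h2] using hadj k (by omega)
        · subst hki
          have h2 : k + 1 + (j - k) = j + 1 := by omega
          simpa [h2, hwij] using hadj j (by omega)
        · have h1 : ¬ (k ≤ i) := by omega
          have h2 : ¬ (k + 1 ≤ i) := by omega
          have h3 : k + 1 + (j - i) = k + (j - i) + 1 := by omega
          simpa [h1, h2, h3] using hadj (k + (j - i)) (by omega)
    · refine ih (j - i) (by omega) hodd (fun k => w (i + k)) ?_ ?_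
      · have : i + (j - i) = j := by omega
        simp [this, hwij]
      · intro k hk
        simpa [add_assoc] using hadj (i + k) (by omega)

lemma exists_coloring {V : Type*} {d : ℕ} {G : V × V → Bool} (h : IsKdGraph d G) :
    ∃ κ : V → Bool, ∀ p q, G (p, q) = true → κ q = !κ p := by
  let A : SimpleGraph V :=
    { Adj := fun p q => G (p, q) = true
      symm := ⟨fun p q hpq => by rw [h.1]; exact hpq⟩
      loopless := ⟨fun p hp => by simp [h.2.1] at hp⟩ }
  have hA : A.Colorable 2 := by
    rw [SimpleGraph.two_colorable_iff_forall_loop_even]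
    intro u w
    by_contra hodd
    rw [Nat.not_even_iff_odd] at hodd
    exact no_odd_closed_walk h.2.2.2.2 w.length hodd w.getVert (by simp)
      fun i hi => w.adj_getVert_succ hi
  obtain ⟨C⟩ := hA
  refine ⟨fun p => decide (C p = 0), fun p q hpq => ?_⟩
  have hne : C p ≠ C q := C.valid hpq
  have key : ∀ s t : Fin 2, s ≠ t → decide (t = 0) = !decide (s = 0) := by decide
  exact key _ _ hne

lemma noOddCycle_of_coloring {V : Type*} {G : V × V → Bool} (κ : V → Bool)
    (hκ : ∀ p q, G (p, q) = true → κ q = !κ p) : NoOddCycle G := by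
  rintro n hn ⟨w, hw, hadj, -⟩
  have key : ∀ i ≤ n, κ (w i) = (κ (w 0)).xor (decide (Odd i)) := by
    intro i
    induction i with
    | zero => simp
    | succ i ih =>
      intro hi
      rw [hκ _ _ (hadj i (by omega)), ih (by omega)]
      by_cases ho : Odd i <;> simp [Nat.odd_add_one, ho]
  have := key n le_rfl
  simp [hn, hw] at this

/-! ### Components off a finite set -/

/-- One step along an edge of `G` between two vertices outside `F`. -/
abbrev StepOff {V : Type*} (G : V × V → Bool) (F : Set V) (a b : V) : Prop :=
  a ∉ F ∧ b ∉ F ∧ G (a, b) = true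

/-- `x` and `y` are joined by a path of `G` outside `F` (or are equal). -/
abbrev JoinedOff {V : Type*} (G : V × V → Bool) (F : Set V) : V → V → Prop :=
  Relation.ReflTransGen (StepOff G F)

lemma JoinedOff.symm {V : Type*} {G : V × V → Bool} {F : Set V}
    (hG : ∀ x y, G (x, y) = G (y, x)) {x y : V} (h : JoinedOff G F x y) : JoinedOff G F y x :=
  have : Std.Symm (StepOff G F) := ⟨fun _ _ hab => ⟨hab.2.1, hab.1, by rw [hG]; exact hab.2.2⟩⟩
  Relation.ReflTransGen.stdSymm.symm _ _ h

lemma JoinedOff.not_mem {V : Type*} {G : V × V → Bool} {F : Set V} {x y : V} (hx : x ∉ F)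
    (h : JoinedOff G F x y) : y ∉ F := by
  induction h with
  | refl => exact hx
  | tail _ h _ => exact h.2.1

lemma IsKdGraph.finite_nbr {V : Type*} {d : ℕ} {G : V × V → Bool} (h : IsKdGraph d G) (x : V) :
    {y | G (x, y) = true}.Finite :=
  Set.finite_of_encard_eq_coe (h.2.2.2.1 x)

lemma IsKdGraph.exists_nbr {V : Type*} {d : ℕ} {G : V × V → Bool} (h : IsKdGraph d G)
    (hd : 3 ≤ d) (x : V) : ∃ y, G (x, y) = true := by
  have hne : {y | G (x, y) = true}.Nonempty := by
    rw [← Set.encard_ne_zero, h.2.2.2.1 x]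
    exact_mod_cast (by omega : d ≠ 0)
  exact hne

lemma exists_infinite_component {V : Type*} [Infinite V] {d : ℕ} {G : V × V → Bool}
    (h : IsKdGraph d G) {F : Set V} (hF : F.Finite) :
    ∃ x, x ∉ F ∧ {y | JoinedOff G F x y}.Infinite := by
  by_contra hcon
  push Not at hcon
  obtain ⟨o⟩ : Nonempty V := inferInstance
  -- A finite set meeting every component off `F`; the base point `o` is for the case `F = ∅`.
  let N : Set V := {o} ∪ ⋃ p ∈ F, {q | G (p, q) = true}
  have hN : N.Finite := (Set.finite_singleton o).union (hF.biUnion fun p _ => h.finite_nbr p)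
  have key : ∀ y, y ∉ F → ∃ z ∈ N, z ∉ F ∧ JoinedOff G F z y := by
    intro y
    induction h.2.2.1 o y with
    | refl => exact fun ho => ⟨o, Or.inl rfl, ho, .refl⟩
    | @tail p q _ hpq ih =>
      intro hq
      by_cases hp : p ∈ F
      · exact ⟨q, Or.inr (Set.mem_biUnion hp hpq), hq, .refl⟩
      · obtain ⟨z, hz, hzF, hzp⟩ := ih hp
        exact ⟨z, hz, hzF, hzp.tail ⟨hp, hq, hpq⟩⟩
  have hfin : (F ∪ ⋃ z ∈ N \ F, {y | JoinedOff G F z y}).Finite :=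
    hF.union ((hN.subset Set.sdiff_subset).biUnion fun z hz => hcon z hz.2)
  refine Set.infinite_univ (hfin.subset fun y _ => ?_)
  by_cases hy : y ∈ F
  · exact Or.inl hy
  · obtain ⟨z, hz, hzF, hzy⟩ := key y hy
    exact Or.inr (Set.mem_biUnion (⟨hz, hzF⟩ : z ∈ N \ F) hzy)

/-! ### Inserting the gadget -/

section Gadget

variable {Γ : Type*} {k : ℕ}

/-- Attachment of the vertices of `Γ` to the gadget with vertex set `Fin (k + 3) × Bool`, where
`(i, false)` stands for `uᵢ` and `(i, true)` for `vᵢ`: the pairs `a u₀`, `b v₀`, `c u₁`, `e v₁`. -/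
def Attach (a b c e : Γ) (p : Γ) (x : Fin (k + 3) × Bool) : Prop :=
  (x.1 = 0 ∧ p = if x.2 then b else a) ∨ (x.1 = 1 ∧ p = if x.2 then e else c)

/-- Adjacency of the graph obtained from `G` by deleting the edges `ab` and `ce`, adding
`K_{k+3,k+3}` minus the edges `u₀v₀`, `u₁v₁`, and attaching `a, b, c, e` to it. -/
def GadgetAdj (G : Γ × Γ → Bool) (a b c e : Γ) :
    Γ ⊕ (Fin (k + 3) × Bool) → Γ ⊕ (Fin (k + 3) × Bool) → Prop
  | .inl p, .inl q => G (p, q) = true ∧ ¬(p = a ∧ q = b) ∧ ¬(p = b ∧ q = a) ∧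
      ¬(p = c ∧ q = e) ∧ ¬(p = e ∧ q = c)
  | .inl p, .inr x => Attach a b c e p x
  | .inr x, .inl p => Attach a b c e p x
  | .inr x, .inr y => x.2 ≠ y.2 ∧ ¬(x.1 = y.1 ∧ (x.1 = 0 ∨ x.1 = 1))

open Classical in
/-- The relation `GadgetAdj` as a point of the space of relations. -/
noncomputable def gadgetGraph (k : ℕ) (G : Γ × Γ → Bool) (a b c e : Γ)
    (z : (Γ ⊕ (Fin (k + 3) × Bool)) × (Γ ⊕ (Fin (k + 3) × Bool))) : Bool :=
  decide (GadgetAdj G a b c e z.1 z.2)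

variable {G : Γ × Γ → Bool} {a b c e : Γ}

lemma gadgetGraph_eq_true {v w : Γ ⊕ (Fin (k + 3) × Bool)} :
    gadgetGraph k G a b c e (v, w) = true ↔ GadgetAdj G a b c e v w := by
  simp [gadgetGraph]

lemma gadgetAdj_symm (hG : ∀ x y, G (x, y) = G (y, x)) (v w : Γ ⊕ (Fin (k + 3) × Bool)) :
    GadgetAdj G a b c e v w → GadgetAdj G a b c e w v := by
  rcases v with p | x <;> rcases w with q | y
  · simp only [GadgetAdj]
    rw [hG p q]
    tauto
  · exact id
  · exact id
  · simp only [GadgetAdj]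
    rintro ⟨h1, h2⟩
    refine ⟨h1.symm, ?_⟩
    rintro ⟨h3, h4⟩
    exact h2 ⟨h3.symm, h3 ▸ h4⟩

lemma gadgetGraph_symm (hG : ∀ x y, G (x, y) = G (y, x)) (v w : Γ ⊕ (Fin (k + 3) × Bool)) :
    gadgetGraph k G a b c e (v, w) = gadgetGraph k G a b c e (w, v) := by
  rw [Bool.eq_iff_iff, gadgetGraph_eq_true, gadgetGraph_eq_true]
  exact ⟨gadgetAdj_symm hG v w, gadgetAdj_symm hG w v⟩

lemma inr_not_mem {F : Set Γ} (x : Fin (k + 3) × Bool) :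
    (Sum.inr x : Γ ⊕ (Fin (k + 3) × Bool)) ∉ Sum.inl '' F := by simp

/-- The gadget is connected: every vertex is joined to `u₂`. -/
lemma gadget_joined (F : Set Γ) (x : Fin (k + 3) × Bool) :
    JoinedOff (gadgetGraph k G a b c e) (Sum.inl '' F) (Sum.inr x) (Sum.inr (2, false)) := by
  have h20 : (2 : Fin (k + 3)) ≠ 0 := by
    rw [Ne, Fin.ext_iff]
    simp [Nat.mod_eq_of_lt (by omega : 2 < k + 3)]
  have h21 : (2 : Fin (k + 3)) ≠ 1 := by
    rw [Ne, Fin.ext_iff]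
    simp [Nat.mod_eq_of_lt (by omega : 2 < k + 3)]
  have hv : ∀ i : Fin (k + 3), JoinedOff (gadgetGraph k G a b c e) (Sum.inl '' F)
      (Sum.inr (i, true)) (Sum.inr (2, false)) := by
    intro i
    refine .single ⟨inr_not_mem _, inr_not_mem _, gadgetGraph_eq_true.2 ⟨by simp, ?_⟩⟩
    rintro ⟨h1, h2⟩
    simp only at h1 h2
    subst h1
    tauto
  rcases x with ⟨i, _ | _⟩
  · refine .head ⟨inr_not_mem _, inr_not_mem _, gadgetGraph_eq_true.2 ⟨?_, ?_⟩⟩ (hv 2)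
    · simp
    rintro ⟨h1, h2⟩
    simp only at h1 h2
    subst h1
    tauto
  · exact hv i

lemma attach_joined {F : Set Γ} {p : Γ} (hp : p ∉ F) {x : Fin (k + 3) × Bool}
    (h : Attach a b c e p x) :
    JoinedOff (gadgetGraph k G a b c e) (Sum.inl '' F) (Sum.inl p) (Sum.inr (2, false)) :=
  .head ⟨by simpa using hp, inr_not_mem _, gadgetGraph_eq_true.2 h⟩ (gadget_joined F x)

lemma attach_a : Attach a b c e a ((0, false) : Fin (k + 3) × Bool) := by simp [Attach]
lemma attach_b : Attach a b c e b ((0, true) : Fin (k + 3) × Bool) := by simp [Attach]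
lemma attach_c : Attach a b c e c ((1, false) : Fin (k + 3) × Bool) := by simp [Attach]
lemma attach_e : Attach a b c e e ((1, true) : Fin (k + 3) × Bool) := by simp [Attach]

/-- Inserting the gadget never disconnects: a deleted edge is replaced by a path through the
gadget. -/
lemma joined_inl (hG : ∀ x y, G (x, y) = G (y, x)) {F : Set Γ} {p q : Γ}
    (h : JoinedOff G F p q) :
    JoinedOff (gadgetGraph k G a b c e) (Sum.inl '' F) (Sum.inl p) (Sum.inl q) := by
  induction h with
  | refl => exact .refl
  | @tail p q _ hpq ih =>
    refine ih.trans ?_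
    obtain ⟨hp, hq, hpq⟩ := hpq
    have hub : ∀ {x y : Fin (k + 3) × Bool}, Attach a b c e p x → Attach a b c e q y →
        JoinedOff (gadgetGraph k G a b c e) (Sum.inl '' F) (Sum.inl p) (Sum.inl q) :=
      fun hx hy => (attach_joined hp hx).trans
        ((attach_joined hq hy).symm (gadgetGraph_symm hG))
    by_cases h1 : p = a ∧ q = b
    · obtain ⟨rfl, rfl⟩ := h1; exact hub attach_a attach_b
    by_cases h2 : p = b ∧ q = a
    · obtain ⟨rfl, rfl⟩ := h2; exact hub attach_b attach_a
    by_cases h3 : p = c ∧ q = e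
    · obtain ⟨rfl, rfl⟩ := h3; exact hub attach_c attach_e
    by_cases h4 : p = e ∧ q = c
    · obtain ⟨rfl, rfl⟩ := h4; exact hub attach_e attach_c
    exact .single ⟨by simpa using hp, by simpa using hq,
      gadgetGraph_eq_true.2 ⟨hpq, h1, h2, h3, h4⟩⟩

open Classical in
/-- Old vertices keep their degree: each deleted edge is traded for one edge to the gadget. -/
lemma encard_nbr_inl (hG : ∀ x y, G (x, y) = G (y, x)) (hab : G (a, b) = true)
    (hce : G (c, e) = true) (h1 : ¬(a = c ∧ b = e)) (h2 : ¬(a = e ∧ b = c))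
    (hne : a ≠ b) (hne' : c ≠ e) (p : Γ) :
    {w | gadgetGraph k G a b c e (Sum.inl p, w) = true}.encard =
      {q | G (p, q) = true}.encard := by
  let f : Γ → Γ ⊕ (Fin (k + 3) × Bool) := fun q =>
    if p = a ∧ q = b then .inr (0, false) else
    if p = b ∧ q = a then .inr (0, true) else
    if p = c ∧ q = e then .inr (1, false) else
    if p = e ∧ q = c then .inr (1, true) else .inl q
  have h01 : (0 : Fin (k + 3)) ≠ 1 := by simp
  have hf : Set.InjOn f {q | G (p, q) = true} := by
    intro q _ q' _ h
    simp only [f] at h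
    split_ifs at h <;> simp_all
  rw [← hf.encard_image]
  congr 1
  ext w
  simp only [gadgetGraph_eq_true, Set.mem_ofPred_eq, Set.mem_image]
  constructor
  · intro hw
    rcases w with q | ⟨i, β⟩
    · obtain ⟨g0, g1, g2, g3, g4⟩ := hw
      exact ⟨q, g0, by simp [f, g1, g2, g3, g4]⟩
    · rcases hw with ⟨hi, hp⟩ | ⟨hi, hp⟩ <;> simp only at hi hp <;> subst hi <;>
        cases β <;> simp only [if_true, if_false, Bool.false_eq_true] at hp <;> subst hp
      · exact ⟨b, hab, by simp [f]⟩
      · exact ⟨a, by rw [hG]; exact hab, by simp [f, hne.symm]⟩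
      · refine ⟨e, hce, ?_⟩
        have g1 : ¬(p = a ∧ e = b) := fun hh => h1 ⟨hh.1.symm, hh.2.symm⟩
        have g2 : ¬(p = b ∧ e = a) := fun hh => h2 ⟨hh.2.symm, hh.1.symm⟩
        simp [f, g1, g2]
      · refine ⟨c, by rw [hG]; exact hce, ?_⟩
        have g1 : ¬(p = a ∧ c = b) := fun hh => h2 ⟨hh.1.symm, hh.2.symm⟩
        have g2 : ¬(p = b ∧ c = a) := fun hh => h1 ⟨hh.2.symm, hh.1.symm⟩
        have g3 : ¬(p = c ∧ c = p) := fun hh => hne' hh.2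
        simp [f, g1, g2, g3]
  · rintro ⟨q, hq, rfl⟩
    simp only [f]
    split_ifs with g1 g2 g3 g4
    · rw [g1.1]; exact attach_a
    · rw [g2.1]; exact attach_b
    · rw [g3.1]; exact attach_c
    · rw [g4.1]; exact attach_e
    · exact ⟨hq, g1, g2, g3, g4⟩

open Classical in
/-- Gadget vertices have degree `k + 3`: the edge missing at `u₀, v₀, u₁, v₁` is traded for the
attaching edge. -/
lemma encard_nbr_inr (x : Fin (k + 3) × Bool) :
    {w | gadgetGraph k G a b c e (Sum.inr x, w) = true}.encard = ((k + 3 : ℕ) : ℕ∞) := by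
  obtain ⟨i, β⟩ := x
  let f : Fin (k + 3) → Γ ⊕ (Fin (k + 3) × Bool) := fun j =>
    if i = j ∧ i = 0 then .inl (if β then b else a) else
    if i = j ∧ i = 1 then .inl (if β then e else c) else .inr (j, !β)
  have h01 : (0 : Fin (k + 3)) ≠ 1 := by simp
  have hf : Function.Injective f := by
    intro j j' h
    simp only [f] at h
    split_ifs at h <;> simp_all
  have hcard : (Set.range f).encard = ((k + 3 : ℕ) : ℕ∞) := by
    rw [← Set.image_univ, hf.encard_image, Set.encard_univ]
    simp
  rw [← hcard]
  congr 1
  ext w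
  simp only [gadgetGraph_eq_true, Set.mem_ofPred_eq, Set.mem_range]
  constructor
  · intro hw
    rcases w with q | ⟨j, γ⟩
    · rcases hw with ⟨hi, hp⟩ | ⟨hi, hp⟩ <;> simp only at hi hp <;> subst hi <;> subst hp
      · exact ⟨0, by simp [f]⟩
      · exact ⟨1, by simp [f]⟩
    · obtain ⟨g1, g2⟩ := hw
      simp only at g1 g2
      refine ⟨j, ?_⟩
      have g3 : (!β) = γ := by cases β <;> cases γ <;> simp_all
      have g4 : ¬ (i = j ∧ i = 0) := by tauto
      have g5 : ¬ (i = j ∧ i = 1) := by tauto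
      simp only [f, g3, if_neg g4, if_neg g5]
  · rintro ⟨j, rfl⟩
    simp only [f]
    split_ifs with g1 g2 g3 g4
    · exact Or.inl ⟨g1.2, by simp [g2]⟩
    · exact Or.inl ⟨g1.2, by simp [g2]⟩
    · exact Or.inr ⟨g3.2, by simp [g4]⟩
    · exact Or.inr ⟨g3.2, by simp [g4]⟩
    · refine ⟨by simp, ?_⟩
      rintro ⟨g5, g6 | g6⟩
      · exact g1 ⟨g5, g6⟩
      · exact g3 ⟨g5, g6⟩

lemma isKdGraph_gadgetGraph (h : IsKdGraph (k + 3) G) {κ : Γ → Bool}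
    (hκ : ∀ p q, G (p, q) = true → κ q = !κ p) (hab : G (a, b) = true) (hce : G (c, e) = true)
    (hac : κ a = κ c) (hdist : ¬(a = c ∧ b = e)) :
    IsKdGraph (k + 3) (gadgetGraph k G a b c e) := by
  have hb := hκ _ _ hab
  have he := hκ _ _ hce
  have hne : a ≠ b := by rintro rfl; simp at hb
  have hne' : c ≠ e := by rintro rfl; simp at he
  have hdist' : ¬(a = e ∧ b = c) := by rintro ⟨rfl, rfl⟩; simp [hac] at he
  refine ⟨gadgetGraph_symm h.1, ?_, ?_, ?_, ?_⟩
  · intro v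
    rw [← Bool.not_eq_true, gadgetGraph_eq_true]
    rcases v with p | x
    · rintro ⟨h0, -⟩
      simp [h.2.1] at h0
    · rintro ⟨h0, -⟩
      exact h0 rfl
  · have hub : ∀ v, JoinedOff (gadgetGraph k G a b c e) (Sum.inl '' (∅ : Set Γ)) v
        (Sum.inr (2, false)) := by
      rintro (p | x)
      · refine (joined_inl h.1 ?_).trans (attach_joined (Set.notMem_empty a) attach_a)
        exact Relation.ReflTransGen.mono
          (fun u v huv => ⟨Set.notMem_empty u, Set.notMem_empty v, huv⟩) _ _ (h.2.2.1 p a)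
      · exact gadget_joined _ x
    intro v w
    exact Relation.ReflTransGen.mono (fun _ _ huv => huv.2.2) _ _
      ((hub v).trans ((hub w).symm (gadgetGraph_symm h.1)))
  · rintro (p | x)
    · rw [encard_nbr_inl h.1 hab hce hdist hdist' hne hne', h.2.2.2.1]
    · exact encard_nbr_inr x
  · refine noOddCycle_of_coloring
      (Sum.elim κ fun x => if x.2 then κ a else !κ a) ?_
    intro v w hvw
    rw [gadgetGraph_eq_true] at hvw
    rcases v with p | ⟨i, β⟩ <;> rcases w with q | ⟨j, γ⟩
    · exact hκ _ _ hvw.1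
    · rcases hvw with ⟨-, hp⟩ | ⟨-, hp⟩ <;> cases γ <;> simp at hp <;> subst hp <;>
        simp [hac, hb, he]
    · rcases hvw with ⟨-, hp⟩ | ⟨-, hp⟩ <;> cases β <;> simp at hp <;> subst hp <;>
        simp [hac, hb, he]
    · have := hvw.1
      cases β <;> cases γ <;> simp_all

end Gadget

/-! ### Relabelling -/

lemma IsKdGraph.relabel {V W : Type*} {d : ℕ} {H : V × V → Bool} (h : IsKdGraph d H)
    (φ : W ≃ V) : IsKdGraph d (fun z : W × W => H (φ z.1, φ z.2)) := by
  refine ⟨fun x y => h.1 _ _, fun x => h.2.1 _, fun x y => ?_, fun x => ?_, ?_⟩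
  · have := (h.2.2.1 (φ x) (φ y)).lift (p := fun a b : W => H (φ a, φ b) = true) φ.symm
      (fun u v huv => by simpa [Function.onFun] using huv)
    simpa [Function.onFun] using this
  · rw [← h.2.2.2.1 (φ x), ← φ.injective.encard_image]
    congr 1
    ext v
    simp only [Set.mem_image, Set.mem_ofPred_eq]
    exact ⟨by rintro ⟨y, hy, rfl⟩; exact hy, fun hv => ⟨φ.symm v, by simpa using hv, by simp⟩⟩
  · rintro n hn ⟨w, h1, h2, h3⟩
    exact h.2.2.2.2 n hn ⟨fun i => φ (w i), by simp [h1], h2,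
      fun i j hij hj hh => h3 i j hij hj (φ.injective hh)⟩

/-- Finitely many new points can be absorbed by a bijection fixing a given finite set. -/
lemma exists_equiv_fixing {Γ Q : Type*} [Countable Γ] [Infinite Γ] [Finite Q] {S : Set Γ}
    (hS : S.Finite) : ∃ φ : Γ ≃ Γ ⊕ Q, ∀ s ∈ S, φ s = Sum.inl s := by
  classical
  have : Infinite (Sᶜ : Set Γ) := hS.infinite_compl.to_subtype
  have : Countable Q := Finite.to_countable
  obtain ⟨ψ⟩ : Nonempty ((Sᶜ : Set Γ) ≃ (Sᶜ : Set Γ) ⊕ Q) := nonempty_equiv_of_countable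
  refine ⟨(Equiv.Set.sumCompl S).symm.trans (((Equiv.refl S).sumCongr ψ).trans
    ((Equiv.sumAssoc S (Sᶜ : Set Γ) Q).symm.trans
      ((Equiv.Set.sumCompl S).sumCongr (Equiv.refl Q)))), fun s hs => ?_⟩
  simp [Equiv.Set.sumCompl_symm_apply_of_mem hs]

/-- A graph in `K_d` in which `x` and `y` have different infinite components off `F` can be
changed, keeping all edges and non-edges within a finite set `S`, so that `x` and `y` become
joined off `F`. -/
lemma exists_joining {Γ : Type*} [Countable Γ] [Infinite Γ] {d : ℕ} (hd : 3 ≤ d)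
    {G : Γ × Γ → Bool} (h : IsKdGraph d G) {F S : Set Γ} (hS : S.Finite) (hFS : F ⊆ S) {x y : Γ}
    (hxS : x ∈ S) (hyS : y ∈ S) (hx : x ∉ F) (hy : y ∉ F)
    (hxi : {z | JoinedOff G F x z}.Infinite) (hyi : {z | JoinedOff G F y z}.Infinite)
    (hxy : ¬ JoinedOff G F x y) :
    ∃ G' : Γ × Γ → Bool, IsKdGraph d G' ∧ (∀ p ∈ S, ∀ q ∈ S, G' (p, q) = G (p, q)) ∧
      JoinedOff G' F x y := by
  obtain ⟨κ, hκ⟩ := exists_coloring h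
  obtain ⟨k, rfl⟩ : ∃ k, d = k + 3 := ⟨d - 3, by omega⟩
  obtain ⟨a, hxa, haS⟩ := (hxi.sdiff hS).nonempty
  obtain ⟨c, hyc, hcS⟩ := (hyi.sdiff hS).nonempty
  simp only [Set.mem_ofPred_eq] at hxa hyc
  obtain ⟨b, hab⟩ := h.exists_nbr hd a
  obtain ⟨e, hce⟩ := h.exists_nbr hd c
  have haF := hxa.not_mem hx
  have hcF := hyc.not_mem hy
  have hac : a ≠ c := by
    rintro rfl
    exact hxy (hxa.trans (hyc.symm h.1))
  have hae : ¬ (a = e ∧ b = c) := by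
    rintro ⟨rfl, rfl⟩
    exact hxy ((hxa.tail ⟨haF, hcF, hab⟩).trans (hyc.symm h.1))
  -- Orient the second edge so that its first endpoint has the colour of `a`.
  obtain ⟨c', e', hce', hcol, hdist, hS', m, hm⟩ : ∃ c' e', G (c', e') = true ∧ κ a = κ c' ∧
      ¬ (a = c' ∧ b = e') ∧ ¬ (c' ∈ S ∧ e' ∈ S) ∧
      ∃ m : Fin (k + 3) × Bool, Attach a b c' e' c m := by
    by_cases hcol : κ a = κ c
    · exact ⟨c, e, hce, hcol, fun hh => hac hh.1, fun hh => hcS hh.1, _, attach_c⟩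
    · refine ⟨e, c, by rw [h.1]; exact hce, ?_, hae, fun hh => hcS hh.2, _, attach_e⟩
      rw [hκ _ _ hce]
      revert hcol
      cases κ a <;> cases κ c <;> simp
  obtain ⟨φ, hφ⟩ := exists_equiv_fixing (Q := Fin (k + 3) × Bool) hS
  have hH := isKdGraph_gadgetGraph h hκ hab hce' hcol hdist
  refine ⟨_, hH.relabel φ, ?_, ?_⟩
  · intro p hp q hq
    simp only [hφ p hp, hφ q hq]
    rw [Bool.eq_iff_iff, gadgetGraph_eq_true]
    refine ⟨fun hh => hh.1, fun hpq => ⟨hpq, ?_, ?_, ?_, ?_⟩⟩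
    · rintro ⟨rfl, rfl⟩; exact haS hp
    · rintro ⟨rfl, rfl⟩; exact haS hq
    · rintro ⟨rfl, rfl⟩; exact hS' ⟨hp, hq⟩
    · rintro ⟨rfl, rfl⟩; exact hS' ⟨hq, hp⟩
  · have hj : JoinedOff (gadgetGraph k G a b c' e') (Sum.inl '' F) (Sum.inl x) (Sum.inl y) :=
      ((joined_inl h.1 hxa).trans (attach_joined haF attach_a)).trans
        (JoinedOff.symm hH.1 ((joined_inl h.1 hyc).trans (attach_joined hcF hm)))
    have hF : ∀ v, v ∉ Sum.inl '' F → φ.symm v ∉ F := by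
      intro v hv hvF
      exact hv ⟨φ.symm v, hvF, by simpa using (hφ _ (hFS hvF)).symm⟩
    have := hj.lift (p := StepOff
        (fun z : Γ × Γ => gadgetGraph k G a b c' e' (φ z.1, φ z.2)) F) φ.symm
      (fun u v huv => ⟨hF u huv.1, hF v huv.2.1, by simpa using huv.2.2⟩)
    have hx' : φ.symm (Sum.inl x) = x := by rw [← hφ x hxS]; simp
    have hy' : φ.symm (Sum.inl y) = y := by rw [← hφ y hyS]; simp
    rwa [Function.onFun, hx', hy'] at this

/-! ### Category -/

section Category

open Topology Filter

variable {Γ : Type*} {d : ℕ}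

lemma eventually_edge (G : {G : Γ × Γ → Bool // IsKdGraph d G}) (z : Γ × Γ) :
    ∀ᶠ G' : {G : Γ × Γ → Bool // IsKdGraph d G} in 𝓝 G, G'.1 z = G.1 z := by
  have hc : Continuous fun G' : {G : Γ × Γ → Bool // IsKdGraph d G} => G'.1 z :=
    (continuous_apply z).comp continuous_subtype_val
  exact hc.continuousAt.eventually ((isOpen_discrete {G.1 z}).mem_nhds rfl)

lemma eventually_joinedOff {G : {G : Γ × Γ → Bool // IsKdGraph d G}} {F : Set Γ} {x y : Γ}
    (h : JoinedOff G.1 F x y) :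
    ∀ᶠ G' : {G : Γ × Γ → Bool // IsKdGraph d G} in 𝓝 G, JoinedOff G'.1 F x y := by
  induction h with
  | refl => exact Eventually.of_forall fun _ => .refl
  | @tail p q _ hpq ih =>
    filter_upwards [ih, eventually_edge G (p, q)] with G' h1 h2
    exact h1.tail ⟨hpq.1, hpq.2.1, h2.trans hpq.2.2⟩

/-- Having a finite component is an open condition: by regularity, a graph containing all edges of
`G` at this component has no further edges there. -/
lemma eventually_finite_component {G : {G : Γ × Γ → Bool // IsKdGraph d G}} {F : Set Γ} {x : Γ}
    (h : {z | JoinedOff G.1 F x z}.Finite) :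
    ∀ᶠ G' : {G : Γ × Γ → Bool // IsKdGraph d G} in 𝓝 G, {z | JoinedOff G'.1 F x z}.Finite := by
  have hev : ∀ᶠ G' : {G : Γ × Γ → Bool // IsKdGraph d G} in 𝓝 G,
      ∀ p ∈ {z | JoinedOff G.1 F x z}, ∀ q ∈ {q | G.1 (p, q) = true}, G'.1 (p, q) = G.1 (p, q) := by
    rw [eventually_all_finite h]
    intro p _
    rw [eventually_all_finite (G.2.finite_nbr p)]
    exact fun q _ => eventually_edge G (p, q)
  filter_upwards [hev] with G' hG'
  refine h.subset fun z hz => ?_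
  simp only [Set.mem_ofPred_eq] at hz ⊢
  induction hz with
  | refl => exact .refl
  | @tail p q _ hpq ih =>
    have hsub : {q | G.1 (p, q) = true} ⊆ {q | G'.1 (p, q) = true} :=
      fun q hq => (hG' p ih q hq).trans hq
    have heq : {q | G.1 (p, q) = true} = {q | G'.1 (p, q) = true} :=
      (G'.2.finite_nbr p).eq_of_subset_of_encard_le' hsub
        (by rw [G.2.2.2.2.1 p, G'.2.2.2.2.1 p])
    have hq : q ∈ {q | G.1 (p, q) = true} := heq ▸ hpq.2.2
    exact ih.tail ⟨hpq.1, hpq.2.1, hq⟩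

/-- The graphs in `K_d` in which `x` and `y` lie in different infinite components off `F`. -/
def SeparatedOff (d : ℕ) (F : Set Γ) (x y : Γ) : Set {G : Γ × Γ → Bool // IsKdGraph d G} :=
  {G | {z | JoinedOff G.1 F x z}.Infinite ∧ {z | JoinedOff G.1 F y z}.Infinite ∧
    ¬ JoinedOff G.1 F x y}

lemma isClosed_separatedOff (F : Set Γ) (x y : Γ) : IsClosed (SeparatedOff d F x y) := by
  rw [← isOpen_compl_iff, isOpen_iff_mem_nhds]
  intro G hG
  by_cases h1 : JoinedOff G.1 F x y
  · filter_upwards [eventually_joinedOff h1] with G' h hG'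
    exact hG'.2.2 h
  by_cases h2 : {z | JoinedOff G.1 F x z}.Finite
  · filter_upwards [eventually_finite_component h2] with G' h hG'
    exact hG'.1 h
  by_cases h3 : {z | JoinedOff G.1 F y z}.Finite
  · filter_upwards [eventually_finite_component h3] with G' h hG'
    exact hG'.2.1 h
  exact absurd ⟨h2, h3, h1⟩ hG

lemma isNowhereDense_separatedOff [Countable Γ] [Infinite Γ] (hd : 3 ≤ d) {F : Set Γ}
    (hF : F.Finite) {x y : Γ} (hx : x ∉ F) (hy : y ∉ F) :
    IsNowhereDense (SeparatedOff d F x y) := by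
  classical
  rw [(isClosed_separatedOff F x y).isNowhereDense_iff, Set.eq_empty_iff_forall_notMem]
  intro G hG
  obtain ⟨U, hU, hUo, hGU⟩ := mem_interior.1 hG
  obtain ⟨O, hO, rfl⟩ := isOpen_induced_iff.1 hUo
  obtain ⟨I, u, hu, hIu⟩ := isOpen_pi_iff.1 hO G.1 hGU
  obtain ⟨hxi, hyi, hxy⟩ := hU hGU
  -- A finite set of vertices carrying `F`, `x`, `y` and all pairs constrained by the open set.
  let S : Set Γ := F ∪ ({x, y} ∪ ((I.image Prod.fst : Finset Γ) ∪ (I.image Prod.snd : Finset Γ)))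
  have hS : S.Finite := hF.union ((Set.toFinite _).union
    ((Finset.finite_toSet _).union (Finset.finite_toSet _)))
  obtain ⟨G', hG', hagree, hjoin⟩ := exists_joining hd G.2 hS (Set.subset_union_left)
    (by simp [S]) (by simp [S]) hx hy hxi hyi hxy
  have hmem : (⟨G', hG'⟩ : {G : Γ × Γ → Bool // IsKdGraph d G}) ∈ Subtype.val ⁻¹' O := by
    refine hIu fun z hz => ?_
    have h1 : z.1 ∈ S :=
      Or.inr (Or.inr (Or.inl (Finset.mem_coe.2 (Finset.mem_image_of_mem Prod.fst hz))))
    have h2 : z.2 ∈ S :=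
      Or.inr (Or.inr (Or.inr (Finset.mem_coe.2 (Finset.mem_image_of_mem Prod.snd hz))))
    change G' (z.1, z.2) ∈ u z
    rw [hagree _ h1 _ h2]
    exact (hu z hz).2
  exact (hU hmem).2.2 hjoin

end Category

/-- For `d ≥ 3`, the set of one-ended graphs is comeagre in the space
`K_d(Γ)` of connected bipartite `d`-regular graphs on `Γ`. -/
theorem stmt_17 {Γ : Type*} [Group Γ] [Countable Γ] [Infinite Γ]
    (d : ℕ) (hd : 3 ≤ d) :
    IsMeagre {G : {G : Γ × Γ → Bool // IsKdGraph d G} |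
      ¬ OneEnded (G : Γ × Γ → Bool)} := by
  have hmeagre : IsMeagre (⋃ t : {t : Finset Γ × Γ × Γ // t.2.1 ∉ t.1 ∧ t.2.2 ∉ t.1},
      SeparatedOff d (t.1.1 : Set Γ) t.1.2.1 t.1.2.2) :=
    isMeagre_iUnion fun t => (isNowhereDense_separatedOff hd t.1.1.finite_toSet
      (by simpa using t.2.1) (by simpa using t.2.2)).isMeagre
  refine hmeagre.mono fun G hG => ?_
  by_contra hcon
  refine hG fun F hF => ⟨exists_infinite_component G.2 hF, fun x y hx hy hxi hyi => ?_⟩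
  by_contra hxy
  refine hcon (Set.mem_iUnion.2 ⟨⟨(hF.toFinset, x, y), by simpa using hx, by simpa using hy⟩, ?_⟩)
  simp only [Set.Finite.coe_toFinset]
  exact ⟨hxi, hyi, hxy⟩
end

section
/- Let Γ be a countably infinite group and let μ be a symmetric probability measure on Γ (μ({γ}) = μ({γ⁻¹}) for all γ) whose support generates Γ. For an increment sequence ξ ∈ Γ^ℕ and γ ∈ Γ define the random walk Z_0(γ, ξ) = γ and Z_{n+1}(γ, ξ) = Z_n(γ, ξ)·ξ_n, and equip Γ^ℕ with the infinite product measure μ^ℕ. Let ER(Γ) ⊆ 2^(Γ×Γ) be the set of equivalence relations on Γ, equipped with the logic action of Γ, and let ν be a Γ-invariant Borel probability measure on ER(Γ). Then for ν-almost every E ∈ ER(Γ), every E-class C has a frequency: there exists r ∈ [0,1] such that for every γ ∈ Γ, for μ^ℕ-almost every ξ, (1/n)·Σ_{i=0}^{n-1} 1(Z_i(γ, ξ) ∈ C) converges to r as n → ∞. -/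
open MeasureTheory

/-- The logic action of `Γ` on binary relations on `Γ` (coded as points of `2^(Γ×Γ)`):
`(γ·R)(x,y) ⇔ R(γ⁻¹x, γ⁻¹y)`. -/
def logicAct {Γ : Type*} [Group Γ] (γ : Γ) (R : Γ × Γ → Bool) : Γ × Γ → Bool :=
  fun q => R (γ⁻¹ * q.1, γ⁻¹ * q.2)

/-- `R` codes an equivalence relation on `Γ`. -/
def IsEquivRel {Γ : Type*} (R : Γ × Γ → Bool) : Prop :=
  (∀ x, R (x, x) = true) ∧
  (∀ x y, R (x, y) = true → R (y, x) = true) ∧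
  (∀ x y z, R (x, y) = true → R (y, z) = true → R (x, z) = true)

/-- The random walk with increments `ξ` started at `γ`:
`Z_0 = γ`, `Z_{n+1} = Z_n · ξ_n`. -/
def walk {Γ : Type*} [Group Γ] (γ : Γ) (ξ : ℕ → Γ) : ℕ → Γ
  | 0 => γ
  | n + 1 => walk γ ξ n * ξ n

/-!
The law `ν` induces a measure `m` on the subsets of `Γ`: the expected number of classes in a given
family of subsets (`classMeasure`). It is invariant under translation
(`measurePreserving_shiftClass`), because the number of classes in a family can be counted with any
transversal. It is σ-finite, because each point lies in exactly one class. It suffices to show that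
`m`-almost every set `C` has a frequency (`ae_relClass_of_ae`).

Two-sided random walk paths, together with a set `C` recentred at the walker, carry the product of
the path measure and `m`. The time shift `walkStep` on this σ-finite space is invertible and
measure-preserving; the symmetry of `μ` makes time reversal an isomorphism with the inverse shift.
The indicator that the walker is in `C` is integrable, so the pointwise ergodic theorem applies.
In the form `ae_limsup_le_liminf`, derived from the maximal ergodic inequality, it says that the
upper average visit frequency of `C` along the future is at most the lower one along the past, and
conversely. Future and past are independent given `C`. A single typical past therefore determines
the limit for almost every future, so the frequency is a constant depending only on `C` and on the
starting point (`ae_exists_frequency_one`).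

The first step of the walk does not affect the limit, so the constants for the starting points `γ`
and `γ * s` agree whenever `s` is in the support of `μ`. The support generates `Γ`, and the constant
is the same for all starting points (`exists_frequency_of_forall`).
-/

open Filter Topology

/-! ### A pointwise ergodic theorem for σ-finite measures -/

/-- The maximum of the Birkhoff sums of `f` of lengths `0, …, n`, defined recursively. -/
def maxSum {X : Type*} (T : X → X) (f : X → ℝ) : ℕ → X → ℝ
  | 0 => fun _ => 0
  | n + 1 => fun x => max 0 (f x + maxSum T f n (T x))

lemma maxSum_nonneg {X : Type*} (T : X → X) (f : X → ℝ) (n : ℕ) (x : X) :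
    0 ≤ maxSum T f n x := by
  cases n with
  | zero => exact le_rfl
  | succ n => exact le_max_left _ _

lemma maxSum_le_succ {X : Type*} (T : X → X) (f : X → ℝ) (n : ℕ) (x : X) :
    maxSum T f n x ≤ maxSum T f (n + 1) x := by
  induction n generalizing x with
  | zero => exact le_max_left _ _
  | succ n ih => exact max_le_max le_rfl (by have := ih (T x); linarith)

lemma birkhoffSum_le_maxSum {X : Type*} (T : X → X) (f : X → ℝ) (n : ℕ) (x : X) :
    birkhoffSum T f n x ≤ maxSum T f n x := by
  induction n generalizing x with
  | zero => simp [maxSum]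
  | succ n ih =>
    rw [birkhoffSum_succ']
    exact le_trans (by have := ih (T x); linarith) (le_max_right _ _)

section Ergodic

variable {X : Type*} [MeasurableSpace X] {m : Measure X}

lemma integrable_maxSum {T : X → X} (hT : MeasurePreserving T m m) {f : X → ℝ}
    (hf : Integrable f m) (n : ℕ) : Integrable (maxSum T f n) m := by
  induction n with
  | zero => exact integrable_zero _ _ _
  | succ n ih =>
    exact (integrable_zero X ℝ m).sup (hf.add (hT.integrable_comp_of_integrable ih))

lemma measurable_maxSum {T : X → X} (hT : Measurable T) {f : X → ℝ}
    (hf : Measurable f) (n : ℕ) : Measurable (maxSum T f n) := by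
  induction n with
  | zero => exact measurable_const
  | succ n ih => exact measurable_const.max (hf.add (ih.comp hT))

/-- The maximal ergodic inequality. On the set `{M (n + 1) > 0}` one has `f = M (n + 1) - M n ∘ T`,
and the integral of `M n ∘ T` is that of `M n ≤ M (n + 1)`. -/
lemma setIntegral_maxSum_pos {T : X → X} (hT : MeasurePreserving T m m) {f : X → ℝ}
    (hfm : Measurable f) (hf : Integrable f m) (n : ℕ) :
    0 ≤ ∫ x in {x | 0 < maxSum T f (n + 1) x}, f x ∂m := by
  set S := {x | 0 < maxSum T f (n + 1) x}
  have hS : MeasurableSet S :=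
    measurableSet_lt measurable_const (measurable_maxSum hT.measurable hfm (n + 1))
  have hi := integrable_maxSum hT hf n
  have hiT : Integrable (fun x => maxSum T f n (T x)) m := hT.integrable_comp_of_integrable hi
  have hi1 := integrable_maxSum hT hf (n + 1)
  have e1 : ∫ x, maxSum T f n (T x) ∂m = ∫ x, maxSum T f n x ∂m := by
    have := integral_map (μ := m) hT.measurable.aemeasurable (f := maxSum T f n)
      (by rw [hT.map_eq]; exact hi.aestronglyMeasurable)
    rw [hT.map_eq] at this
    exact this.symm
  have e2 : ∫ x in S, maxSum T f (n + 1) x ∂m = ∫ x, maxSum T f (n + 1) x ∂m := by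
    rw [← integral_indicator hS]
    congr 1
    ext x
    by_cases hx : x ∈ S
    · simp [hx]
    · have h0 := maxSum_nonneg T f (n + 1) x
      have : ¬ 0 < maxSum T f (n + 1) x := hx
      simp only [hx, not_false_eq_true, Set.indicator_of_notMem]
      linarith
  have e3 : ∫ x in S, maxSum T f n (T x) ∂m ≤ ∫ x, maxSum T f n (T x) ∂m :=
    setIntegral_le_integral hiT (ae_of_all _ fun x => maxSum_nonneg T f n (T x))
  have e4 : ∫ x, maxSum T f n x ∂m ≤ ∫ x, maxSum T f (n + 1) x ∂m :=
    integral_mono hi hi1 (maxSum_le_succ T f n)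
  have e5 : ∫ x in S, f x ∂m
      = ∫ x in S, (maxSum T f (n + 1) x - maxSum T f n (T x)) ∂m := by
    apply setIntegral_congr_fun hS
    intro x hx
    have hx' : 0 < max 0 (f x + maxSum T f n (T x)) := hx
    have : maxSum T f (n + 1) x = f x + maxSum T f n (T x) := by
      change max 0 (f x + maxSum T f n (T x)) = _
      rcases lt_max_iff.1 hx' with h | h
      · exact absurd h (lt_irrefl _)
      · exact max_eq_right h.le
    simp [this]
  rw [e5, integral_sub hi1.integrableOn hiT.integrableOn]
  linarith

/-- The maximal ergodic inequality in the limit of infinite length, for a function whose support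
lies in the set where some Birkhoff sum is positive. -/
lemma integral_nonneg_of_birkhoffSum_pos {T : X → X} (hT : MeasurePreserving T m m) {f : X → ℝ}
    (hfm : Measurable f) (hf : Integrable f m)
    (h : ∀ x, f x ≠ 0 → ∃ n, 0 < birkhoffSum T f n x) : 0 ≤ ∫ x, f x ∂m := by
  let S : ℕ → Set X := fun n => {x | 0 < maxSum T f (n + 1) x}
  have hS : ∀ n, MeasurableSet (S n) := fun n =>
    measurableSet_lt measurable_const (measurable_maxSum hT.measurable hfm (n + 1))
  have hmono : Monotone S := monotone_nat_of_le_succ fun n x hx =>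
    lt_of_lt_of_le (show 0 < maxSum T f (n + 1) x from hx) (maxSum_le_succ T f (n + 1) x)
  have ht := tendsto_setIntegral_of_monotone (μ := m) (f := f) hS hmono hf.integrableOn
  have hU : ∫ x in ⋃ n, S n, f x ∂m = ∫ x, f x ∂m := by
    apply setIntegral_eq_integral_of_forall_compl_eq_zero
    intro x hx
    by_contra h0
    obtain ⟨n, hn⟩ := h x h0
    refine hx (Set.mem_iUnion.2 ⟨n, ?_⟩)
    exact lt_of_lt_of_le hn ((birkhoffSum_le_maxSum T f n x).trans (maxSum_le_succ T f n x))
  rw [hU] at ht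
  exact ge_of_tendsto' ht fun n => setIntegral_maxSum_pos hT hfm hf n

lemma birkhoffSum_eq_on {X : Type*} {T : X → X} {D : Set X} (hD : ∀ x ∈ D, T x ∈ D)
    {f g : X → ℝ} (h : ∀ x ∈ D, f x = g x) (n : ℕ) {x : X} (hx : x ∈ D) :
    birkhoffSum T f n x = birkhoffSum T g n x := by
  induction n generalizing x with
  | zero => simp
  | succ n ih => rw [birkhoffSum_succ', birkhoffSum_succ', h x hx, ih (hD x hx)]

lemma birkhoffSum_le_on {X : Type*} {T : X → X} {D : Set X} (hD : ∀ x ∈ D, T x ∈ D)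
    {f g : X → ℝ} (h : ∀ x ∈ D, f x ≤ g x) (n : ℕ) {x : X} (hx : x ∈ D) :
    birkhoffSum T f n x ≤ birkhoffSum T g n x := by
  induction n generalizing x with
  | zero => simp
  | succ n ih =>
    rw [birkhoffSum_succ', birkhoffSum_succ']
    exact add_le_add (h x hx) (ih (hD x hx))

lemma birkhoffSum_sub_const {X : Type*} (T : X → X) (f : X → ℝ) (b : ℝ) (n : ℕ) (x : X) :
    birkhoffSum T (fun y => f y - b) n x = birkhoffSum T f n x - n * b := by
  induction n generalizing x with
  | zero => simp
  | succ n ih => rw [birkhoffSum_succ', birkhoffSum_succ', ih]; push_cast; ring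

lemma birkhoffSum_const_sub {X : Type*} (T : X → X) (f : X → ℝ) (b : ℝ) (n : ℕ) (x : X) :
    birkhoffSum T (fun y => b - f y) n x = n * b - birkhoffSum T f n x := by
  induction n generalizing x with
  | zero => simp
  | succ n ih => rw [birkhoffSum_succ', birkhoffSum_succ', ih]; push_cast; ring

/-- If `D` is stable under `T` and `T'`, some average of `f` along `T` exceeds `b` at every point of
`D`, and some average along `T'` is below `a < b`, then `D` is null: the maximal inequality gives
`b * m D ≤ ∫ x in D, f x ∂m ≤ a * m D`. -/
lemma measure_eq_zero_of_averages [SigmaFinite m] {T T' : X → X} (hT : MeasurePreserving T m m)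
    (hT' : MeasurePreserving T' m m) {f : X → ℝ} (hfm : Measurable f) (hf : Integrable f m)
    {D : Set X} (hDm : MeasurableSet D) (hD : ∀ x ∈ D, T x ∈ D)
    (hD' : ∀ x ∈ D, T' x ∈ D) {a b : ℝ} (hb : 0 < b) (hab : a < b)
    (hup : ∀ x ∈ D, ∃ n : ℕ, n * b < birkhoffSum T f n x)
    (hlo : ∀ x ∈ D, ∃ n : ℕ, birkhoffSum T' f n x < n * a) : m D = 0 := by
  have hfD : Integrable (D.indicator f) m := hf.indicator hDm
  have key : ∀ D' : Set X, MeasurableSet D' → D' ⊆ D → m D' < ⊤ →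
      b * (m D').toReal ≤ ∫ x in D, f x ∂m := by
    intro D' hD'm hsub hfin
    have hc : Integrable (D'.indicator fun _ => b) m :=
      (integrable_indicator_iff hD'm).2 (integrableOn_const hfin.ne)
    have := integral_nonneg_of_birkhoffSum_pos hT
      (f := fun x => D.indicator f x - D'.indicator (fun _ => b) x)
      ((hfm.indicator hDm).sub (measurable_const.indicator hD'm)) (hfD.sub hc) ?_
    · rw [integral_sub hfD hc, integral_indicator hDm, integral_indicator hD'm,
        setIntegral_const, smul_eq_mul] at this
      simp only [Measure.real] at this
      linarith
    · intro x hx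
      have hxD : x ∈ D := by
        by_contra h
        have h' : x ∉ D' := fun h' => h (hsub h')
        simp [h, h'] at hx
      obtain ⟨n, hn⟩ := hup x hxD
      refine ⟨n, lt_of_lt_of_le ?_ (birkhoffSum_le_on hD (f := fun y => f y - b) ?_ n hxD)⟩
      · rw [birkhoffSum_sub_const]; linarith
      · intro y hy
        simp only [Set.indicator_of_mem hy]
        have : D'.indicator (fun _ => b) y ≤ b := by
          by_cases h : y ∈ D' <;> simp [h, hb.le]
        linarith
  -- Finiteness of `m D` comes from the bound `key` on an exhaustion by sets of finite measure.
  have hfin : m D < ⊤ := by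
    have hle : m D ≤ ENNReal.ofReal ((∫ x in D, f x ∂m) / b) := by
      have hU : D = ⋃ n, D ∩ spanningSets m n := by
        rw [← Set.inter_iUnion, iUnion_spanningSets, Set.inter_univ]
      have hmono : Monotone fun n => D ∩ spanningSets m n := fun i j hij =>
        Set.inter_subset_inter_right _ (monotone_spanningSets m hij)
      rw [hU, hmono.measure_iUnion]
      refine iSup_le fun n => ?_
      have hlt : m (D ∩ spanningSets m n) < ⊤ :=
        (measure_mono Set.inter_subset_right).trans_lt (measure_spanningSets_lt_top m n)
      rw [← ENNReal.ofReal_toReal hlt.ne, ← hU]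
      apply ENNReal.ofReal_le_ofReal
      rw [le_div_iff₀ hb, mul_comm]
      exact key _ (hDm.inter (measurableSet_spanningSets m n)) Set.inter_subset_left hlt
    exact hle.trans_lt ENNReal.ofReal_lt_top
  have h1 := key D hDm subset_rfl hfin
  have h2 : ∫ x in D, f x ∂m ≤ a * (m D).toReal := by
    have hc : Integrable (D.indicator fun _ => a) m :=
      (integrable_indicator_iff hDm).2 (integrableOn_const hfin.ne)
    have := integral_nonneg_of_birkhoffSum_pos hT'
      (f := fun x => D.indicator (fun _ => a) x - D.indicator f x)
      ((measurable_const.indicator hDm).sub (hfm.indicator hDm)) (hc.sub hfD) ?_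
    · rw [integral_sub hc hfD, integral_indicator hDm, integral_indicator hDm,
        setIntegral_const, smul_eq_mul] at this
      simp only [Measure.real] at this
      linarith
    · intro x hx
      have hxD : x ∈ D := by
        by_contra h
        simp [h] at hx
      obtain ⟨n, hn⟩ := hlo x hxD
      refine ⟨n, lt_of_lt_of_le ?_ (birkhoffSum_le_on hD' (f := fun y => a - f y) ?_ n hxD)⟩
      · rw [birkhoffSum_const_sub]; linarith
      · intro y hy
        simp [Set.indicator_of_mem hy]
  have h3 : (m D).toReal = 0 := by
    have : 0 ≤ (m D).toReal := ENNReal.toReal_nonneg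
    nlinarith
  exact ((ENNReal.toReal_eq_zero_iff _).1 h3).resolve_right hfin.ne

end Ergodic

lemma limsup_le_limsup_of_tendsto_sub {u v : ℕ → ℝ} (hu : ∀ n, u n ∈ Set.Icc (0 : ℝ) 1)
    (hv : ∀ n, v n ∈ Set.Icc (0 : ℝ) 1) (h : Tendsto (fun n => u n - v n) atTop (𝓝 0)) :
    limsup u atTop ≤ limsup v atTop := by
  apply le_of_forall_lt_imp_le_of_dense
  intro c hc
  obtain ⟨d, hcd, hd⟩ := exists_between hc
  have h1 : ∃ᶠ n in atTop, d < u n :=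
    frequently_lt_of_lt_limsup (isBoundedUnder_of ⟨0, fun n => (hu n).1⟩).isCoboundedUnder_le hd
  have h2 : ∀ᶠ n in atTop, u n - v n < d - c := h.eventually_lt_const (by linarith)
  exact le_limsup_of_frequently_le ((h1.and_eventually h2).mono fun n hn => by linarith [hn.1, hn.2])
    (isBoundedUnder_of ⟨1, fun n => (hv n).2⟩)

lemma liminf_le_liminf_of_tendsto_sub {u v : ℕ → ℝ} (hu : ∀ n, u n ∈ Set.Icc (0 : ℝ) 1)
    (hv : ∀ n, v n ∈ Set.Icc (0 : ℝ) 1) (h : Tendsto (fun n => u n - v n) atTop (𝓝 0)) :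
    liminf u atTop ≤ liminf v atTop := by
  apply le_of_forall_gt_imp_ge_of_dense
  intro c hc
  obtain ⟨d, hd, hdc⟩ := exists_between hc
  have h1 : ∃ᶠ n in atTop, v n < d :=
    frequently_lt_of_liminf_lt (isBoundedUnder_of ⟨1, fun n => (hv n).2⟩).isCoboundedUnder_ge hd
  have h2 : ∀ᶠ n in atTop, u n - v n < c - d := h.eventually_lt_const (by linarith)
  exact liminf_le_of_frequently_le ((h1.and_eventually h2).mono fun n hn => by linarith [hn.1, hn.2])
    (isBoundedUnder_of ⟨0, fun n => (hu n).1⟩)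

lemma average_mem_Icc {c : ℕ → ℝ} (hc : ∀ n, c n ∈ Set.Icc (0 : ℝ) 1) (n : ℕ) :
    (∑ i ∈ Finset.range n, c i) / n ∈ Set.Icc (0 : ℝ) 1 := by
  refine ⟨div_nonneg (Finset.sum_nonneg fun i _ => (hc i).1) n.cast_nonneg, ?_⟩
  apply div_le_one_of_le₀ _ n.cast_nonneg
  calc ∑ i ∈ Finset.range n, c i ≤ ∑ i ∈ Finset.range n, (1 : ℝ) :=
        Finset.sum_le_sum fun i _ => (hc i).2
    _ = n := by simp

lemma birkhoffAverage_eq_div {X : Type*} (T : X → X) (f : X → ℝ) (n : ℕ) (x : X) :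
    birkhoffAverage ℝ T f n x = (∑ i ∈ Finset.range n, f (T^[i] x)) / n := by
  rw [birkhoffAverage, birkhoffSum, smul_eq_mul, div_eq_inv_mul]

section Ergodic

variable {X : Type*} [MeasurableSpace X] {m : Measure X}

/-- For an invertible measure-preserving `T` with inverse `T'`, the upper averages along `T` are at
most the lower averages along `T'`. Exchanging `T` and `T'`, both averages converge, to a common
limit. -/
lemma ae_limsup_le_liminf [SigmaFinite m] {T T' : X → X} (hT : MeasurePreserving T m m)
    (hT' : MeasurePreserving T' m m) (hTT' : ∀ x, T' (T x) = x) (hT'T : ∀ x, T (T' x) = x)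
    {f : X → ℝ} (hfm : Measurable f) (hf : Integrable f m)
    (h01 : ∀ x, f x ∈ Set.Icc (0 : ℝ) 1) :
    ∀ᵐ x ∂m, limsup (fun n => birkhoffAverage ℝ T f n x) atTop ≤
      liminf (fun n => birkhoffAverage ℝ T' f n x) atTop := by
  have hA : ∀ (S : X → X) x n, birkhoffAverage ℝ S f n x ∈ Set.Icc (0 : ℝ) 1 := by
    intro S x n
    rw [birkhoffAverage_eq_div]
    exact average_mem_Icc (fun i => h01 _) n
  have hbd : Bornology.IsBounded (Set.range f) :=
    (Metric.isBounded_Icc (0 : ℝ) 1).subset (by rintro _ ⟨x, rfl⟩; exact h01 x)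
  have hsub := fun (S : X → X) x => tendsto_birkhoffAverage_apply_sub_birkhoffAverage' ℝ hbd S x
  have hsub' : ∀ (S : X → X) x, Tendsto (fun n => birkhoffAverage ℝ S f n x -
      birkhoffAverage ℝ S f n (S x)) atTop (𝓝 0) := by
    intro S x
    simpa using (hsub S x).neg
  set L := fun x => limsup (fun n => birkhoffAverage ℝ T f n x) atTop with hL
  set l := fun x => liminf (fun n => birkhoffAverage ℝ T' f n x) atTop with hl
  have hL1 : ∀ x, L (T x) = L x := fun x => le_antisymm
    (limsup_le_limsup_of_tendsto_sub (hA T _) (hA T _) (hsub T x))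
    (limsup_le_limsup_of_tendsto_sub (hA T _) (hA T _) (hsub' T x))
  have hl1 : ∀ x, l (T' x) = l x := fun x => le_antisymm
    (liminf_le_liminf_of_tendsto_sub (hA T' _) (hA T' _) (hsub T' x))
    (liminf_le_liminf_of_tendsto_sub (hA T' _) (hA T' _) (hsub' T' x))
  have hL2 : ∀ x, L (T' x) = L x := fun x => by rw [← hL1 (T' x), hT'T]
  have hl2 : ∀ x, l (T x) = l x := fun x => by rw [← hl1 (T x), hTT']
  have hmA : ∀ (S : X → X), Measurable S → ∀ n, Measurable (birkhoffAverage ℝ S f n) := by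
    intro S hS n
    simp only [funext (birkhoffAverage_eq_div S f n)]
    exact (Finset.measurable_sum _ fun i _ => hfm.comp (hS.iterate i)).div_const _
  have hLm : Measurable L := Measurable.limsup (hmA T hT.measurable)
  have hlm : Measurable l := Measurable.liminf (hmA T' hT'.measurable)
  have hl0 : ∀ x, 0 ≤ l x := fun x => le_liminf_of_le
    (isBoundedUnder_of ⟨1, fun n => (hA T' x n).2⟩).isCoboundedUnder_ge
    (Eventually.of_forall fun n => (hA T' x n).1)
  have key : ∀ a b : ℚ, a < b → ∀ᵐ x ∂m, ¬ ((b : ℝ) < L x ∧ l x < a) := by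
    intro a b hab
    have hab' : (a : ℝ) < b := by exact_mod_cast hab
    rcases le_or_gt (a : ℝ) 0 with ha | ha
    · exact ae_of_all _ fun x hx => by linarith [hl0 x, hx.2]
    rw [ae_iff]
    simp only [not_not]
    refine measure_eq_zero_of_averages hT hT' hfm hf (a := a) (b := b) ?_ ?_ ?_
      (by linarith) hab' ?_ ?_
    · exact (measurableSet_lt measurable_const hLm).inter (measurableSet_lt hlm measurable_const)
    · intro x hx
      simpa only [Set.mem_ofPred_eq, hL1, hl2] using hx
    · intro x hx
      simpa only [Set.mem_ofPred_eq, hL2, hl1] using hx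
    · intro x hx
      have h1 : ∃ᶠ n in atTop, (b : ℝ) < birkhoffAverage ℝ T f n x := frequently_lt_of_lt_limsup
        (isBoundedUnder_of ⟨0, fun n => (hA T x n).1⟩).isCoboundedUnder_le hx.1
      obtain ⟨n, hn, hn0⟩ := (h1.and_eventually (eventually_gt_atTop 0)).exists
      refine ⟨n, ?_⟩
      have hn0' : (0 : ℝ) < n := by exact_mod_cast hn0
      rw [birkhoffAverage, smul_eq_mul, ← div_eq_inv_mul, lt_div_iff₀ hn0'] at hn
      linarith
    · intro x hx
      have h1 : ∃ᶠ n in atTop, birkhoffAverage ℝ T' f n x < (a : ℝ) := frequently_lt_of_liminf_lt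
        (isBoundedUnder_of ⟨1, fun n => (hA T' x n).2⟩).isCoboundedUnder_ge hx.2
      obtain ⟨n, hn, hn0⟩ := (h1.and_eventually (eventually_gt_atTop 0)).exists
      refine ⟨n, ?_⟩
      have hn0' : (0 : ℝ) < n := by exact_mod_cast hn0
      rw [birkhoffAverage, smul_eq_mul, ← div_eq_inv_mul, div_lt_iff₀ hn0'] at hn
      linarith
  have key' : ∀ᵐ x ∂m, ∀ a b : ℚ, a < b → ¬ ((b : ℝ) < L x ∧ l x < a) := by
    rw [ae_all_iff]; intro a
    rw [ae_all_iff]; intro b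
    by_cases hab : a < b
    · filter_upwards [key a b hab] with x hx _ using hx
    · exact ae_of_all _ fun x h => absurd h hab
  filter_upwards [key'] with x hx
  by_contra! hlt
  obtain ⟨a, ha, ha'⟩ := exists_rat_btwn hlt
  obtain ⟨b, hb, hb'⟩ := exists_rat_btwn ha'
  exact hx a b (by exact_mod_cast hb) ⟨hb', ha⟩

end Ergodic

/-! ### Increment sequences -/

section Increments

variable {Γ : Type*}

/-- The sequence `s, ξ 0, ξ 1, …`. -/
def consSeq (s : Γ) (ξ : ℕ → Γ) : ℕ → Γ
  | 0 => s
  | n + 1 => ξ n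

/-- The sequence `ξ 1, ξ 2, …`. -/
def tailSeq (ξ : ℕ → Γ) : ℕ → Γ := fun n => ξ (n + 1)

lemma consSeq_tailSeq (ξ : ℕ → Γ) : consSeq (ξ 0) (tailSeq ξ) = ξ := by
  ext n; cases n <;> rfl

variable [MeasurableSpace Γ]

lemma measurable_consSeq : Measurable fun p : Γ × (ℕ → Γ) => consSeq p.1 p.2 := by
  refine measurable_pi_lambda _ fun n => ?_
  cases n with
  | zero => exact measurable_fst
  | succ n => exact (measurable_pi_apply n).comp measurable_snd

lemma measurable_tailSeq : Measurable (tailSeq : (ℕ → Γ) → ℕ → Γ) :=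
  measurable_pi_lambda _ fun n => measurable_pi_apply (n + 1)

lemma measure_ext_of_cylinders [Countable Γ] [MeasurableSingletonClass Γ]
    {P Q : Measure (ℕ → Γ)} [IsFiniteMeasure P]
    (h : ∀ (F : Finset ℕ) (f : ℕ → Γ),
      P {ξ | ∀ n ∈ F, ξ n = f n} = Q {ξ | ∀ n ∈ F, ξ n = f n}) : P = Q := by
  rcases isEmpty_or_nonempty Γ with hΓ | ⟨⟨s⟩⟩
  · ext S
    have : S = ∅ := Set.eq_empty_of_isEmpty S
    simp [this]
  refine IsProjectiveLimit.unique (P := fun I : Finset ℕ => P.map I.restrict) (fun I => rfl) ?_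
  intro I
  refine Measure.ext_of_singleton fun a => ?_
  have hpre : (I.restrict : (ℕ → Γ) → I → Γ) ⁻¹' {a} =
      {ξ | ∀ n ∈ I, ξ n = (fun k => if hk : k ∈ I then a ⟨k, hk⟩ else s) n} := by
    ext ξ
    simp only [Set.mem_preimage, Set.mem_singleton_iff, Set.mem_ofPred_eq, funext_iff]
    constructor
    · intro hx n hn
      simpa [hn] using hx ⟨n, hn⟩
    · rintro hx ⟨n, hn⟩
      simpa [hn] using hx n hn
  rw [Measure.map_apply (Finset.measurable_restrict I) (measurableSet_singleton a),
    Measure.map_apply (Finset.measurable_restrict I) (measurableSet_singleton a), hpre, h]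

variable [Countable Γ] [MeasurableSingletonClass Γ] {μ : Measure Γ} [IsProbabilityMeasure μ]
  {κ : Measure (ℕ → Γ)} [IsProbabilityMeasure κ]

/-- Prepending an independent `μ`-increment preserves the law of the increment sequence. -/
lemma measurePreserving_consSeq
    (hκ : ∀ (F : Finset ℕ) (f : ℕ → Γ), κ {ξ | ∀ n ∈ F, ξ n = f n} = ∏ n ∈ F, μ {f n}) :
    MeasurePreserving (fun p : Γ × (ℕ → Γ) => consSeq p.1 p.2) (μ.prod κ) κ := by
  refine ⟨measurable_consSeq, ?_⟩
  have : IsFiniteMeasure (Measure.map (fun p : Γ × (ℕ → Γ) => consSeq p.1 p.2) (μ.prod κ)) :=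
    Measure.isFiniteMeasure_map _ _
  apply measure_ext_of_cylinders
  intro F f
  have hm : MeasurableSet {ξ : ℕ → Γ | ∀ n ∈ F, ξ n = f n} := by
    have : {ξ : ℕ → Γ | ∀ n ∈ F, ξ n = f n} = ⋂ n ∈ F, (fun ξ : ℕ → Γ => ξ n) ⁻¹' {f n} := by
      ext ξ; simp
    rw [this]
    exact Finset.measurableSet_biInter _ fun n _ =>
      measurable_pi_apply n (measurableSet_singleton _)
  rw [Measure.map_apply measurable_consSeq hm, hκ]
  let F' : Finset ℕ := F.preimage Nat.succ Nat.succ_injective.injOn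
  have hF' : ∀ n, n ∈ F' ↔ n + 1 ∈ F := fun n => Finset.mem_preimage
  have hprod : ∏ n ∈ F'.map ⟨Nat.succ, Nat.succ_injective⟩, μ {f n} = ∏ n ∈ F', μ {f (n + 1)} :=
    Finset.prod_map _ _ _
  by_cases h0 : 0 ∈ F
  · have hF : F = insert 0 (F'.map ⟨Nat.succ, Nat.succ_injective⟩) := by
      ext n
      cases n with
      | zero => simp [h0]
      | succ n => simp [hF']
    have hset : (fun p : Γ × (ℕ → Γ) => consSeq p.1 p.2) ⁻¹' {ξ : ℕ → Γ | ∀ n ∈ F, ξ n = f n} =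
        {f 0} ×ˢ {ξ : ℕ → Γ | ∀ n ∈ F', ξ n = f (n + 1)} := by
      ext ⟨s, ξ⟩
      simp only [Set.mem_preimage, Set.mem_ofPred_eq, Set.mem_prod, Set.mem_singleton_iff]
      constructor
      · intro h
        exact ⟨h 0 h0, fun n hn => h (n + 1) ((hF' n).1 hn)⟩
      · rintro ⟨h1, h2⟩ n hn
        cases n with
        | zero => exact h1
        | succ n => exact h2 n ((hF' n).2 hn)
    rw [hset, Measure.prod_prod, hκ F' (fun n => f (n + 1)), ← hprod]
    rw [← Finset.prod_insert (f := fun n => μ {f n}) (by simp), ← hF]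
  · have hF : F = F'.map ⟨Nat.succ, Nat.succ_injective⟩ := by
      ext n
      cases n with
      | zero => simp [h0]
      | succ n => simp [hF']
    have hset : (fun p : Γ × (ℕ → Γ) => consSeq p.1 p.2) ⁻¹' {ξ : ℕ → Γ | ∀ n ∈ F, ξ n = f n} =
        Set.univ ×ˢ {ξ : ℕ → Γ | ∀ n ∈ F', ξ n = f (n + 1)} := by
      ext ⟨s, ξ⟩
      simp only [Set.mem_preimage, Set.mem_ofPred_eq, Set.mem_prod, Set.mem_univ, true_and]
      constructor
      · intro h n hn
        exact h (n + 1) ((hF' n).1 hn)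
      · intro h2 n hn
        cases n with
        | zero => exact absurd hn h0
        | succ n => exact h2 n ((hF' n).2 hn)
    rw [hset, Measure.prod_prod, hκ F' (fun n => f (n + 1)), ← hprod, ← hF]
    simp

end Increments

section TwoSided

variable {Γ : Type*} [Group Γ] [Countable Γ] [MeasurableSpace Γ] [MeasurableSingletonClass Γ]
  {μ : Measure Γ} {κ : Measure (ℕ → Γ)}

lemma measurePreserving_inv_of_symm (hsym : ∀ γ : Γ, μ {γ} = μ {γ⁻¹}) :
    MeasurePreserving (fun γ : Γ => γ⁻¹) μ μ := by
  refine ⟨Measurable.of_discrete, Measure.ext_of_singleton fun a => ?_⟩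
  rw [Measure.map_apply Measurable.of_discrete (measurableSet_singleton a), hsym a]
  congr 1
  ext x
  simp

/-- The time shift on two-sided paths. A path is a pair of its future increments and of the
increments of the path run backwards, so the increment `s` just used becomes `s⁻¹` in the past. -/
def pathShift (p : (ℕ → Γ) × (ℕ → Γ)) : (ℕ → Γ) × (ℕ → Γ) :=
  (tailSeq p.1, consSeq (p.1 0)⁻¹ p.2)

lemma measurable_pathShift : Measurable (pathShift : (ℕ → Γ) × (ℕ → Γ) → _) := by
  refine (measurable_tailSeq.comp measurable_fst).prodMk (measurable_consSeq.comp
    (Measurable.prodMk ?_ measurable_snd))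
  exact (Measurable.of_discrete (f := fun γ : Γ => γ⁻¹)).comp
    ((measurable_pi_apply 0).comp measurable_fst)

/-- Symmetry of `μ` makes the two-sided path measure stationary. -/
lemma measurePreserving_pathShift [IsProbabilityMeasure μ] [IsProbabilityMeasure κ]
    (hsym : ∀ γ : Γ, μ {γ} = μ {γ⁻¹})
    (hκ : ∀ (F : Finset ℕ) (f : ℕ → Γ), κ {ξ | ∀ n ∈ F, ξ n = f n} = ∏ n ∈ F, μ {f n}) :
    MeasurePreserving (pathShift : (ℕ → Γ) × (ℕ → Γ) → _) (κ.prod κ) (κ.prod κ) := by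
  have hc := measurePreserving_consSeq hκ
  have h1 : MeasurePreserving (fun q : (Γ × (ℕ → Γ)) × (ℕ → Γ) => (consSeq q.1.1 q.1.2, q.2))
      ((μ.prod κ).prod κ) (κ.prod κ) := hc.prod (MeasurePreserving.id κ)
  have h2 : MeasurePreserving
      (fun q : (Γ × (ℕ → Γ)) × (ℕ → Γ) => (q.1.2, consSeq q.1.1⁻¹ q.2))
      ((μ.prod κ).prod κ) (κ.prod κ) := by
    have a1 : MeasurePreserving (fun q : (Γ × (ℕ → Γ)) × (ℕ → Γ) => ((q.1.2, q.1.1⁻¹), q.2))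
        ((μ.prod κ).prod κ) ((κ.prod μ).prod κ) :=
      ((((MeasurePreserving.id κ).prod (measurePreserving_inv_of_symm hsym)).comp
        Measure.measurePreserving_swap)).prod (MeasurePreserving.id κ)
    have a2 : MeasurePreserving (MeasurableEquiv.prodAssoc : ((ℕ → Γ) × Γ) × (ℕ → Γ) ≃ᵐ _)
      ((κ.prod μ).prod κ) (κ.prod (μ.prod κ)) := measurePreserving_prodAssoc κ μ κ
    exact ((MeasurePreserving.id κ).prod hc).comp (a2.comp a1)
  refine ⟨measurable_pathShift, ?_⟩
  conv_lhs => rw [← h1.map_eq]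
  rw [Measure.map_map measurable_pathShift h1.measurable]
  exact h2.map_eq

end TwoSided

/-! ### The measure counting classes -/

section Classes

variable {Γ : Type*}

/-- The class of `g` under `R`, as a point of `2^Γ`. -/
def relClass (R : Γ × Γ → Bool) (g : Γ) : Γ → Bool := fun y => R (g, y)

/-- `g` comes first in its `R`-class, in the enumeration `e` of `Γ`. -/
def IsLeastRep (e : Γ → ℕ) (R : Γ × Γ → Bool) (g : Γ) : Prop :=
  ∀ h, R (g, h) = true → e g ≤ e h

/-- The set `t` meets every `R`-class in exactly one point. -/
def IsTransversal (R : Γ × Γ → Bool) (t : Γ → Prop) : Prop :=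
  ∀ x, ∃! g, R (x, g) = true ∧ t g

lemma relClass_eq {R : Γ × Γ → Bool} (hR : IsEquivRel R) {g h : Γ} (hgh : R (g, h) = true) :
    relClass R g = relClass R h := by
  ext y
  rw [Bool.eq_iff_iff]
  exact ⟨fun H => hR.2.2 _ _ _ (hR.2.1 _ _ hgh) H, fun H => hR.2.2 _ _ _ hgh H⟩

lemma isTransversal_isLeastRep {e : Γ → ℕ} (he : Function.Injective e) {R : Γ × Γ → Bool}
    (hR : IsEquivRel R) : IsTransversal R (IsLeastRep e R) := by
  intro x
  obtain ⟨g, hg, hmin⟩ := (InvImage.wf e Nat.lt_wfRel.wf).has_min {g | R (x, g) = true}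
    ⟨x, hR.1 x⟩
  refine ⟨g, ⟨hg, fun h hh => not_lt.1 (hmin h (hR.2.2 _ _ _ hg hh))⟩, ?_⟩
  rintro g' ⟨hg', hl⟩
  exact he (le_antisymm (hl g (hR.2.2 _ _ _ (hR.2.1 _ _ hg') hg)) (not_lt.1 (hmin g' hg')))

open Classical in
lemma tsum_transversal {R : Γ × Γ → Bool} {t : Γ → Prop}
    (ht : IsTransversal R t) (x : Γ) (c : ENNReal) :
    ∑' g, (if R (x, g) = true ∧ t g then c else 0) = c := by
  obtain ⟨g, hg, hu⟩ := ht x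
  rw [tsum_eq_single g]
  · rw [if_pos hg]
  · intro g' hne
    rw [if_neg]
    exact fun h => hne (hu g' h)

open Classical in
/-- The sum of a function over the classes of `R` can be computed with any transversal. -/
lemma tsum_transversal_eq {R : Γ × Γ → Bool} (hR : IsEquivRel R) {t t' : Γ → Prop}
    (ht : IsTransversal R t) (ht' : IsTransversal R t') (F : (Γ → Bool) → ENNReal) :
    ∑' g, (if t g then F (relClass R g) else 0) = ∑' g, if t' g then F (relClass R g) else 0 := by
  have h1 : ∀ g, (if t g then F (relClass R g) else 0) =
      ∑' h, if R (g, h) = true ∧ t' h then (if t g then F (relClass R g) else 0) else 0 :=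
    fun g => (tsum_transversal ht' g _).symm
  have h2 : ∀ h, (if t' h then F (relClass R h) else 0) =
      ∑' g, if R (h, g) = true ∧ t g then (if t' h then F (relClass R h) else 0) else 0 :=
    fun h => (tsum_transversal ht h _).symm
  rw [tsum_congr h1, tsum_congr h2, ENNReal.tsum_comm]
  refine tsum_congr fun h => tsum_congr fun g => ?_
  by_cases hgh : R (g, h) = true
  · have hhg := hR.2.1 _ _ hgh
    rw [relClass_eq hR hgh]
    simp only [hgh, hhg, true_and]
    by_cases a : t g <;> by_cases b : t' h <;> simp [a, b]
  · have hhg : ¬ R (h, g) = true := fun H => hgh (hR.2.1 _ _ H)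
    simp [hgh, hhg]

lemma measurable_relClass (g : Γ) : Measurable fun R : Γ × Γ → Bool => relClass R g :=
  measurable_pi_lambda _ fun y => measurable_pi_apply (g, y)

lemma measurableSet_visit (x : Γ) : MeasurableSet {C : Γ → Bool | C x = true} := by
  have hm : MeasurableSet ((fun C : Γ → Bool => C x) ⁻¹' {true}) :=
    measurable_pi_apply x (measurableSet_singleton true)
  exact hm

lemma measurableSet_isLeastRep [Countable Γ] (e : Γ → ℕ) (g : Γ) :
    MeasurableSet {R : Γ × Γ → Bool | IsLeastRep e R g} := by
  have : {R : Γ × Γ → Bool | IsLeastRep e R g} =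
      ⋂ h, {R | R (g, h) = true → e g ≤ e h} := by
    ext R; simp [IsLeastRep]
  rw [this]
  refine MeasurableSet.iInter fun h => ?_
  by_cases hh : e g ≤ e h
  · simp [hh]
  · simp only [hh, imp_false]
    have hm : MeasurableSet ((fun R : Γ × Γ → Bool => R (g, h)) ⁻¹' {true}) :=
      measurable_pi_apply (g, h) (measurableSet_singleton true)
    exact hm.compl

/-- The measure on subsets of `Γ` that gives a family of subsets the `ν`-expected number of classes
belonging to it. Each class is counted once, at its first element in the enumeration `e`. -/
noncomputable def classMeasure (e : Γ → ℕ) (ν : Measure (Γ × Γ → Bool)) : Measure (Γ → Bool) :=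
  Measure.sum fun g => (ν.restrict {R | IsLeastRep e R g}).map fun R => relClass R g

variable [Countable Γ] {e : Γ → ℕ} {ν : Measure (Γ × Γ → Bool)}

open Classical in
lemma measurable_term (e : Γ → ℕ) (g : Γ) {F : (Γ → Bool) → ENNReal} (hF : Measurable F) :
    Measurable fun R : Γ × Γ → Bool => if IsLeastRep e R g then F (relClass R g) else 0 :=
  Measurable.ite (measurableSet_isLeastRep e g) (hF.comp (measurable_relClass g)) measurable_const

open Classical in
lemma lintegral_classMeasure {F : (Γ → Bool) → ENNReal} (hF : Measurable F) :
    ∫⁻ C, F C ∂(classMeasure e ν) =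
      ∫⁻ R, ∑' g, (if IsLeastRep e R g then F (relClass R g) else 0) ∂ν := by
  rw [classMeasure, lintegral_sum_measure,
    lintegral_tsum fun g => (measurable_term e g hF).aemeasurable]
  refine tsum_congr fun g => ?_
  rw [lintegral_map hF (measurable_relClass g), ← lintegral_indicator (measurableSet_isLeastRep e g)]
  rfl

lemma ae_relClass_of_ae (he : Function.Injective e) (hER : ∀ᵐ R ∂ν, IsEquivRel R)
    {P : (Γ → Bool) → Prop} (h : ∀ᵐ C ∂(classMeasure e ν), P C) :
    ∀ᵐ R ∂ν, ∀ x, P (relClass R x) := by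
  have h1 : ∀ g, ∀ᵐ R ∂ν, IsLeastRep e R g → P (relClass R g) := by
    intro g
    have h2 : ∀ᵐ C ∂((ν.restrict {R | IsLeastRep e R g}).map fun R => relClass R g), P C :=
      ae_mono (Measure.le_sum (fun g => (ν.restrict {R | IsLeastRep e R g}).map
        fun R => relClass R g) g) h
    exact (ae_restrict_iff' (measurableSet_isLeastRep e g)).1
      (ae_of_ae_map (measurable_relClass g).aemeasurable h2)
  filter_upwards [hER, ae_all_iff.2 h1] with R hR hP x
  obtain ⟨g, ⟨hxg, hg⟩, -⟩ := isTransversal_isLeastRep he hR x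
  rw [relClass_eq hR hxg]
  exact hP g hg

/-- Exactly one class contains a given point `x`. -/
lemma classMeasure_mem (he : Function.Injective e) (hER : ∀ᵐ R ∂ν, IsEquivRel R) (x : Γ) :
    classMeasure e ν {C | C x = true} = ν Set.univ := by
  classical
  have hm := measurableSet_visit x
  rw [← lintegral_indicator_one hm, lintegral_classMeasure (measurable_one.indicator hm),
    ← lintegral_one]
  apply lintegral_congr_ae
  filter_upwards [hER] with R hR
  rw [← tsum_transversal (isTransversal_isLeastRep he hR) x 1]
  refine tsum_congr fun g => ?_
  have hiff : R (g, x) = true ↔ R (x, g) = true := ⟨hR.2.1 _ _, hR.2.1 _ _⟩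
  by_cases a : IsLeastRep e R g <;> by_cases b : R (x, g) = true <;>
    simp [a, b, relClass, Set.indicator, hiff]

lemma classMeasure_empty [Nonempty Γ] (hER : ∀ᵐ R ∂ν, IsEquivRel R) :
    classMeasure e ν {fun _ => false} = 0 := by
  classical
  have hm : MeasurableSet {(fun _ => false : Γ → Bool)} := measurableSet_singleton _
  rw [← lintegral_indicator_one hm, lintegral_classMeasure (measurable_one.indicator hm),
    lintegral_eq_zero_iff' (by
      exact (Measurable.tsum fun g =>
        measurable_term e g (measurable_one.indicator hm)).aemeasurable)]
  filter_upwards [hER] with R hR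
  simp only [Pi.zero_apply, ENNReal.tsum_eq_zero]
  intro g
  have : relClass R g ≠ fun _ => false := fun h => by
    have := congrFun h g
    simp [relClass, hR.1 g] at this
  simp [this]

lemma sigmaFinite_classMeasure [Nonempty Γ] [IsFiniteMeasure ν] (he : Function.Injective e)
    (hER : ∀ᵐ R ∂ν, IsEquivRel R) : SigmaFinite (classMeasure e ν) := by
  refine Measure.sigmaFinite_of_countable (S := insert {fun _ => false}
    (Set.range fun x : Γ => {C : Γ → Bool | C x = true}))
    ((Set.countable_range _).insert _) ?_ ?_
  · rintro s (rfl | ⟨x, rfl⟩)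
    · simp [classMeasure_empty hER]
    · simp [classMeasure_mem he hER]
  · ext C
    simp only [Set.sUnion_insert, Set.sUnion_range, Set.mem_union, Set.mem_singleton_iff,
      Set.mem_iUnion, Set.mem_ofPred_eq, Set.mem_univ, iff_true]
    by_contra! h
    exact h.1 (funext fun x => by simpa using h.2 x)

end Classes

/-! ### Invariance of the counting measure -/

section Invariance

variable {Γ : Type*} [Group Γ] {e : Γ → ℕ} {ν : Measure (Γ × Γ → Bool)}

/-- Left translation of subsets of `Γ`: the set `γC`. -/
def shiftClass (γ : Γ) (C : Γ → Bool) : Γ → Bool := fun y => C (γ⁻¹ * y)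

lemma measurable_shiftClass (γ : Γ) : Measurable (shiftClass γ) :=
  measurable_pi_lambda _ fun y => measurable_pi_apply (γ⁻¹ * y)

lemma measurable_logicAct (γ : Γ) : Measurable (logicAct γ) :=
  measurable_pi_lambda _ fun q => measurable_pi_apply (γ⁻¹ * q.1, γ⁻¹ * q.2)

lemma isLeastRep_logicAct (γ : Γ) (R : Γ × Γ → Bool) (g : Γ) :
    IsLeastRep e (logicAct γ R) (γ * g) ↔ IsLeastRep (fun h => e (γ * h)) R g := by
  simp only [IsLeastRep, logicAct, inv_mul_cancel_left]
  constructor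
  · intro H h hh
    exact H (γ * h) (by simpa using hh)
  · intro H h hh
    simpa using H (γ⁻¹ * h) hh

/-- The counting measure is invariant under translations. Replacing `R` by `γ·R` translates its
classes and changes the transversal of first elements, which does not affect the count. -/
lemma measurePreserving_shiftClass [Countable Γ] (he : Function.Injective e)
    (hν : ∀ γ : Γ, Measure.map (logicAct γ) ν = ν) (hER : ∀ᵐ R ∂ν, IsEquivRel R) (γ : Γ) :
    MeasurePreserving (shiftClass γ) (classMeasure e ν) (classMeasure e ν) := by
  classical
  refine ⟨measurable_shiftClass γ, Measure.ext_of_lintegral _ fun F hF => ?_⟩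
  rw [lintegral_map hF (measurable_shiftClass γ),
    lintegral_classMeasure (F := fun C => F (shiftClass γ C)) (hF.comp (measurable_shiftClass γ)),
    lintegral_classMeasure hF]
  conv_rhs => rw [← hν γ]
  rw [lintegral_map (Measurable.tsum fun g => measurable_term e g hF)
    (measurable_logicAct γ)]
  apply lintegral_congr_ae
  filter_upwards [hER] with R hR
  have he' : Function.Injective fun h => e (γ * h) := he.comp (mul_right_injective γ)
  rw [tsum_transversal_eq hR (isTransversal_isLeastRep he hR) (isTransversal_isLeastRep he' hR)
    (fun C => F (shiftClass γ C))]
  conv_rhs => rw [← (Equiv.mulLeft γ).tsum_eq]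
  refine tsum_congr fun g => ?_
  simp only [Equiv.coe_mulLeft, isLeastRep_logicAct]
  congr 2
  ext y
  simp [relClass, logicAct, shiftClass]

end Invariance

/-! ### The walk seen from the walker -/

section Walk

variable {Γ : Type*} [Group Γ]

lemma walk_mul (γ δ : Γ) (ξ : ℕ → Γ) (i : ℕ) : walk (γ * δ) ξ i = γ * walk δ ξ i := by
  induction i with
  | zero => rfl
  | succ i ih => simp only [walk, ih, mul_assoc]

lemma walk_succ_eq (γ : Γ) (ξ : ℕ → Γ) (i : ℕ) :
    walk γ ξ (i + 1) = walk (γ * ξ 0) (tailSeq ξ) i := by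
  induction i with
  | zero => rfl
  | succ i ih => rw [walk, ih]; rfl

/-- The proportion of the first `n` steps that the walk from `γ` with increments `ξ` spends in `C`. -/
noncomputable def visitAvg (γ : Γ) (C : Γ → Bool) (ξ : ℕ → Γ) (n : ℕ) : ℝ :=
  (∑ i ∈ Finset.range n, if C (walk γ ξ i) = true then (1 : ℝ) else 0) / n

lemma ite_mem_Icc (p : Prop) [Decidable p] : (if p then (1 : ℝ) else 0) ∈ Set.Icc (0 : ℝ) 1 := by
  split_ifs <;> simp

lemma visitAvg_mem_Icc (γ : Γ) (C : Γ → Bool) (ξ : ℕ → Γ) (n : ℕ) :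
    visitAvg γ C ξ n ∈ Set.Icc (0 : ℝ) 1 :=
  average_mem_Icc (fun _ => ite_mem_Icc _) n

lemma visitAvg_shiftClass (γ : Γ) (C : Γ → Bool) (ξ : ℕ → Γ) :
    visitAvg 1 (shiftClass γ⁻¹ C) ξ = visitAvg γ C ξ := by
  ext n
  simp only [visitAvg, shiftClass, inv_inv, ← walk_mul, mul_one]

/-- Dropping the first step of the walk does not change its limiting averages. -/
lemma tendsto_visitAvg_consSeq_sub (γ s : Γ) (C : Γ → Bool) (ξ : ℕ → Γ) :
    Tendsto (fun n => visitAvg (γ * s) C ξ n - visitAvg γ C (consSeq s ξ) n) atTop (𝓝 0) := by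
  have hlim : Tendsto (fun n : ℕ => (1 : ℝ) / n) atTop (𝓝 0) :=
    tendsto_const_nhds.div_atTop tendsto_natCast_atTop_atTop
  refine squeeze_zero_norm (fun n => ?_) hlim
  set c : ℕ → ℝ := fun i => if C (walk γ (consSeq s ξ) i) = true then (1 : ℝ) else 0 with hc
  have h1 : ∀ i, (if C (walk (γ * s) ξ i) = true then (1 : ℝ) else 0) = c (i + 1) := by
    intro i
    simp only [hc, walk_succ_eq]
    rfl
  have hc01 : ∀ i, c i ∈ Set.Icc (0 : ℝ) 1 := fun i => ite_mem_Icc _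
  have : visitAvg (γ * s) C ξ n - visitAvg γ C (consSeq s ξ) n = (c n - c 0) / n := by
    simp only [visitAvg, h1]
    rw [← sub_div, ← Finset.sum_sub_distrib, Finset.sum_range_sub]
  rw [this, norm_div, Real.norm_natCast]
  gcongr
  rw [Real.norm_eq_abs, abs_le]
  constructor <;> linarith [(hc01 n).1, (hc01 n).2, (hc01 0).1, (hc01 0).2]

/-- The indicator of the event that the walker, always placed at `1`, is in the set `C = q.2`. -/
noncomputable def visit (q : ((ℕ → Γ) × (ℕ → Γ)) × (Γ → Bool)) : ℝ :=
  if q.2 1 = true then 1 else 0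

/-- One step of the walk seen from the walker. A point is `((ξ, η), C)`: the future increments `ξ`,
the increments `η` of the walk run backwards in time, and a subset `C` of `Γ`, recentred so that
the walker stays at `1`. -/
def walkStep (q : ((ℕ → Γ) × (ℕ → Γ)) × (Γ → Bool)) : ((ℕ → Γ) × (ℕ → Γ)) × (Γ → Bool) :=
  (pathShift q.1, shiftClass (q.1.1 0)⁻¹ q.2)

/-- Exchanges the future and the past of the walk. -/
def timeReversal (q : ((ℕ → Γ) × (ℕ → Γ)) × (Γ → Bool)) : ((ℕ → Γ) × (ℕ → Γ)) × (Γ → Bool) :=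
  (q.1.swap, q.2)

/-- The inverse of `walkStep`, written as its conjugate by time reversal. -/
def walkStepBack (q : ((ℕ → Γ) × (ℕ → Γ)) × (Γ → Bool)) : ((ℕ → Γ) × (ℕ → Γ)) × (Γ → Bool) :=
  timeReversal (walkStep (timeReversal q))

lemma walkStepBack_walkStep (q : ((ℕ → Γ) × (ℕ → Γ)) × (Γ → Bool)) :
    walkStepBack (walkStep q) = q := by
  obtain ⟨⟨ξ, η⟩, C⟩ := q
  have h1 : tailSeq (consSeq (ξ 0)⁻¹ η) = η := rfl
  have h2 : consSeq ((consSeq (ξ 0)⁻¹ η) 0)⁻¹ (tailSeq ξ) = ξ := by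
    change consSeq (ξ 0)⁻¹⁻¹ (tailSeq ξ) = ξ
    rw [inv_inv, consSeq_tailSeq]
  have h3 : shiftClass ((consSeq (ξ 0)⁻¹ η) 0)⁻¹ (shiftClass (ξ 0)⁻¹ C) = C := by
    ext y
    simp [shiftClass, consSeq]
  simp only [walkStepBack, walkStep, timeReversal, pathShift, Prod.swap, h1, h2, h3]

lemma walkStep_walkStepBack (q : ((ℕ → Γ) × (ℕ → Γ)) × (Γ → Bool)) :
    walkStep (walkStepBack q) = q := by
  have h := walkStepBack_walkStep (timeReversal q)
  rw [walkStepBack] at h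
  exact congrArg timeReversal h

lemma visit_walkStep_iterate (i : ℕ) (q : ((ℕ → Γ) × (ℕ → Γ)) × (Γ → Bool)) :
    visit (walkStep^[i] q) = if q.2 (walk 1 q.1.1 i) = true then 1 else 0 := by
  induction i generalizing q with
  | zero => rfl
  | succ i ih =>
    rw [Function.iterate_succ_apply, ih, walk_succ_eq, one_mul, ← mul_one (q.1.1 0), walk_mul]
    simp only [walkStep, shiftClass, pathShift, inv_inv]

lemma birkhoffAverage_walkStep (n : ℕ) (q : ((ℕ → Γ) × (ℕ → Γ)) × (Γ → Bool)) :
    birkhoffAverage ℝ walkStep visit n q = visitAvg 1 q.2 q.1.1 n := by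
  simp only [birkhoffAverage_eq_div, visit_walkStep_iterate, visitAvg]

lemma birkhoffAverage_walkStepBack (n : ℕ) (q : ((ℕ → Γ) × (ℕ → Γ)) × (Γ → Bool)) :
    birkhoffAverage ℝ walkStepBack visit n q = visitAvg 1 q.2 q.1.2 n := by
  have h : ∀ i, walkStepBack^[i] q = timeReversal (walkStep^[i] (timeReversal q)) := by
    intro i
    induction i with
    | zero => rfl
    | succ i ih => rw [Function.iterate_succ_apply', ih, Function.iterate_succ_apply']; rfl
  rw [birkhoffAverage_eq_div]
  simp only [h]
  exact (birkhoffAverage_eq_div _ _ _ _).symm.trans (birkhoffAverage_walkStep n (timeReversal q))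

end Walk

/-! ### Existence and constancy of frequencies -/

section Frequency

variable {Γ : Type*} [Group Γ] [Countable Γ] [MeasurableSpace Γ] [MeasurableSingletonClass Γ]
  {μ : Measure Γ} [IsProbabilityMeasure μ] {κ : Measure (ℕ → Γ)} [IsProbabilityMeasure κ]

lemma measurePreserving_walkStep {m : Measure (Γ → Bool)} [SigmaFinite m]
    (hm : ∀ γ : Γ, MeasurePreserving (shiftClass γ) m m)
    (hsym : ∀ γ : Γ, μ {γ} = μ {γ⁻¹})
    (hκ : ∀ (F : Finset ℕ) (f : ℕ → Γ), κ {ξ | ∀ n ∈ F, ξ n = f n} = ∏ n ∈ F, μ {f n}) :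
    MeasurePreserving (walkStep (Γ := Γ)) ((κ.prod κ).prod m) ((κ.prod κ).prod m) := by
  refine (measurePreserving_pathShift hsym hκ).skew_product
    (g := fun p C => shiftClass (p.1 0)⁻¹ C) ?_ (ae_of_all _ fun p => (hm _).map_eq)
  have h1 : Measurable fun p : Γ × (Γ → Bool) => shiftClass p.1⁻¹ p.2 :=
    measurable_from_prod_countable_right fun γ => measurable_shiftClass γ⁻¹
  have h2 : Measurable fun q : ((ℕ → Γ) × (ℕ → Γ)) × (Γ → Bool) => (q.1.1 0, q.2) :=
    (((measurable_pi_apply 0).comp measurable_fst).comp measurable_fst).prodMk measurable_snd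
  exact h1.comp h2

/-- For an invariant measure on subsets of `Γ`, almost every subset has a frequency for the walk
from `1`. The averages over the future and over the past have the same limit, while future and past
are independent, so the limit cannot depend on the walk. -/
lemma ae_exists_frequency_one {m : Measure (Γ → Bool)} [SigmaFinite m]
    (hm : ∀ γ : Γ, MeasurePreserving (shiftClass γ) m m) (hfin : m {C | C 1 = true} < ⊤)
    (hsym : ∀ γ : Γ, μ {γ} = μ {γ⁻¹})
    (hκ : ∀ (F : Finset ℕ) (f : ℕ → Γ), κ {ξ | ∀ n ∈ F, ξ n = f n} = ∏ n ∈ F, μ {f n}) :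
    ∀ᵐ C ∂m, ∃ r, ∀ᵐ ξ ∂κ, Tendsto (visitAvg 1 C ξ) atTop (𝓝 r) := by
  have hT := measurePreserving_walkStep hm hsym hκ
  have hrev : MeasurePreserving (timeReversal (Γ := Γ)) ((κ.prod κ).prod m)
      ((κ.prod κ).prod m) := Measure.measurePreserving_swap.prod (MeasurePreserving.id m)
  have hT' : MeasurePreserving (walkStepBack (Γ := Γ)) ((κ.prod κ).prod m)
      ((κ.prod κ).prod m) := hrev.comp (hT.comp hrev)
  have hB : MeasurableSet {q : ((ℕ → Γ) × (ℕ → Γ)) × (Γ → Bool) | q.2 1 = true} :=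
    measurable_snd (measurableSet_visit (1 : Γ))
  have hvis : (visit : ((ℕ → Γ) × (ℕ → Γ)) × (Γ → Bool) → ℝ) =
      Set.indicator {q | q.2 1 = true} fun _ => 1 := by
    ext q
    simp [visit, Set.indicator]
  have hvm : Measurable (visit : ((ℕ → Γ) × (ℕ → Γ)) × (Γ → Bool) → ℝ) := by
    rw [hvis]; exact measurable_const.indicator hB
  have hvi : Integrable (visit : ((ℕ → Γ) × (ℕ → Γ)) × (Γ → Bool) → ℝ)
      ((κ.prod κ).prod m) := by
    rw [hvis, integrable_indicator_iff hB]
    refine integrableOn_const ?_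
    have : {q : ((ℕ → Γ) × (ℕ → Γ)) × (Γ → Bool) | q.2 1 = true} =
        Set.univ ×ˢ {C | C 1 = true} := by ext; simp
    rw [this, Measure.prod_prod]
    simpa using hfin.ne
  have h := ae_limsup_le_liminf hT hT' walkStepBack_walkStep walkStep_walkStepBack hvm hvi
    fun q => ite_mem_Icc _
  simp only [birkhoffAverage_walkStep, birkhoffAverage_walkStepBack] at h
  have h' := hrev.quasiMeasurePreserving.ae h
  have h2 := Measure.ae_ae_of_ae_prod ((Measure.measurePreserving_swap
    (μ := m) (ν := κ.prod κ)).quasiMeasurePreserving.ae (h.and h'))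
  filter_upwards [h2] with C hC
  -- A single typical past `η` pins down the limit for almost every future `ξ`.
  obtain ⟨η, hη⟩ := (Measure.ae_ae_of_ae_prod hC).exists
  refine ⟨limsup (visitAvg 1 C η) atTop, ?_⟩
  filter_upwards [hη] with ξ hξ
  have hbdd : ∀ ζ : ℕ → Γ, IsBoundedUnder (· ≤ ·) atTop (visitAvg 1 C ζ) :=
    fun ζ => isBoundedUnder_of ⟨1, fun n => (visitAvg_mem_Icc 1 C ζ n).2⟩
  have hbdd' : ∀ ζ : ℕ → Γ, IsBoundedUnder (· ≥ ·) atTop (visitAvg 1 C ζ) :=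
    fun ζ => isBoundedUnder_of ⟨0, fun n => (visitAvg_mem_Icc 1 C ζ n).1⟩
  have a1 : limsup (visitAvg 1 C η) atTop ≤ liminf (visitAvg 1 C ξ) atTop := hξ.1
  have a2 : limsup (visitAvg 1 C ξ) atTop ≤ liminf (visitAvg 1 C η) atTop := hξ.2
  exact tendsto_of_le_liminf_of_limsup_le a1
    (a2.trans (liminf_le_limsup (hbdd η) (hbdd' η))) (hbdd ξ) (hbdd' ξ)

/-- Frequencies seen from different starting points agree: conditioning on the first step `s` gives
`r (γ * s) = r γ` for `s` in the support, and the support generates `Γ`. -/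
lemma exists_frequency_of_forall
    (hgen : Subgroup.closure {γ : Γ | μ {γ} ≠ 0} = ⊤)
    (hκ : ∀ (F : Finset ℕ) (f : ℕ → Γ), κ {ξ | ∀ n ∈ F, ξ n = f n} = ∏ n ∈ F, μ {f n})
    {C : Γ → Bool} (h : ∀ γ, ∃ r, ∀ᵐ ξ ∂κ, Tendsto (visitAvg γ C ξ) atTop (𝓝 r)) :
    ∃ r, ∀ γ, ∀ᵐ ξ ∂κ, Tendsto (visitAvg γ C ξ) atTop (𝓝 r) := by
  choose r hr using h
  have hstep : ∀ s, μ {s} ≠ 0 → ∀ γ, r (γ * s) = r γ := by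
    intro s hs γ
    have h1 := Measure.ae_ae_of_ae_prod
      ((measurePreserving_consSeq hκ).quasiMeasurePreserving.ae (hr γ))
    have h2 : ∀ᵐ ξ ∂κ, Tendsto (visitAvg γ C (consSeq s ξ)) atTop (𝓝 (r γ)) := by
      by_contra hn
      exact hs (measure_mono_null (Set.singleton_subset_iff.2 hn) (ae_iff.1 h1))
    obtain ⟨ξ, hξ, hξ'⟩ := (h2.and (hr (γ * s))).exists
    have h3 := (tendsto_visitAvg_consSeq_sub γ s C ξ).add hξ
    simp only [sub_add_cancel, zero_add] at h3
    exact tendsto_nhds_unique hξ' h3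
  have hall : ∀ g : Γ, ∀ γ, r (γ * g) = r γ := by
    intro g
    have hg : g ∈ Subgroup.closure {γ : Γ | μ {γ} ≠ 0} := hgen ▸ Subgroup.mem_top g
    induction hg using Subgroup.closure_induction with
    | mem s hs => exact hstep s hs
    | one => simp
    | mul x y _ _ hx hy => intro γ; rw [← mul_assoc, hy, hx]
    | inv x _ hx => intro γ; rw [← hx (γ * x⁻¹), inv_mul_cancel_right]
  refine ⟨r 1, fun γ => ?_⟩
  have : r γ = r 1 := by simpa using hall γ 1
  exact this ▸ hr γ

end Frequency

/-- existence of frequencies: For a Γ-invariant random equivalence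
relation `ν` on a countably infinite group `Γ` and a symmetric generating step
distribution `μ`, almost surely every class `C` has a frequency: the time averages of
visits of the `μ`-random walk to `C` converge a.s. to a constant `r ∈ [0,1]`,
independently of the starting point. -/
theorem stmt_18 {Γ : Type*} [Group Γ] [Countable Γ] [Infinite Γ]
    [MeasurableSpace Γ] [MeasurableSingletonClass Γ]
    (μ : Measure Γ) [IsProbabilityMeasure μ]
    (hsym : ∀ γ : Γ, μ {γ} = μ {γ⁻¹})
    (hgen : Subgroup.closure {γ : Γ | μ {γ} ≠ 0} = ⊤)
    (κ : Measure (ℕ → Γ)) [IsProbabilityMeasure κ]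
    (hκ : ∀ (F : Finset ℕ) (f : ℕ → Γ),
      κ {ξ | ∀ n ∈ F, ξ n = f n} = ∏ n ∈ F, μ {f n})
    (ν : Measure (Γ × Γ → Bool)) [IsProbabilityMeasure ν]
    (hν : ∀ γ : Γ, Measure.map (logicAct γ) ν = ν)
    (hER : ∀ᵐ R ∂ν, IsEquivRel R) :
    ∀ᵐ R ∂ν, ∀ x : Γ, ∃ r : ℝ, 0 ≤ r ∧ r ≤ 1 ∧
      ∀ γ : Γ, ∀ᵐ ξ ∂κ, Filter.Tendsto
        (fun n : ℕ =>
          (∑ i ∈ Finset.range n,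
            if R (x, walk γ ξ i) = true then (1 : ℝ) else 0) / n)
        Filter.atTop (nhds r) := by
  obtain ⟨e, he⟩ := exists_injective_nat Γ
  have hσ : SigmaFinite (classMeasure e ν) := sigmaFinite_classMeasure he hER
  have hm := measurePreserving_shiftClass he hν hER
  have hfin : classMeasure e ν {C | C 1 = true} < ⊤ := by simp [classMeasure_mem he hER]
  have h1 := ae_exists_frequency_one hm hfin hsym hκ
  have h2 : ∀ᵐ C ∂(classMeasure e ν), ∀ γ, ∃ r, ∀ᵐ ξ ∂κ,
      Tendsto (visitAvg γ C ξ) atTop (𝓝 r) := by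
    rw [ae_all_iff]
    intro γ
    filter_upwards [(hm γ⁻¹).quasiMeasurePreserving.ae h1] with C hC
    simpa only [visitAvg_shiftClass] using hC
  filter_upwards [ae_relClass_of_ae he hER h2] with R hR x
  obtain ⟨r, hr⟩ := exists_frequency_of_forall hgen hκ (hR x)
  obtain ⟨ξ, hξ⟩ := (hr 1).exists
  have hr01 := isClosed_Icc.mem_of_tendsto hξ
    (Eventually.of_forall (visitAvg_mem_Icc 1 (relClass R x) ξ))
  exact ⟨r, hr01.1, hr01.2, hr⟩
end
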